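/- arXiv:1208.4936 — 4 statements merged into one kernel-verified Lean document; each statement's English description precedes it below -/
import Mathlib

section
/- Let 1 < p < ∞ and let f ∈ L^p([0,1]²) satisfy I_p(f) < ∞. Then there exist a continuous function g ∈ H_p^{(2)} and univariate functions φ₁, φ₂ such that f(x,y) = g(x,y) + φ₁(x) + φ₂(y) for almost every (x,y) ∈ ℝ², and there is an absolute constant A > 0 (independent of p and f) with v_p^{(2)}(g) ≤ A[ω(f;1,1)_p + (1/(p·p'))·K_p(f) + (1/(p·p'))²·I_p(f)]. Moreover, if f ∈ L^p_0([0,1]²), then one may take φ₁ = φ₂ = 0. -/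
open MeasureTheory Filter Set
open scoped ENNReal

noncomputable section

/-- A function of two real variables that is 1-periodic in each variable. -/
def BiPeriodic (f : ℝ → ℝ → ℝ) : Prop :=
  (∀ x y, f (x + 1) y = f x y) ∧ (∀ x y, f x (y + 1) = f x y)

/-- A 1-periodic function of one real variable. -/
def Periodic1 (g : ℝ → ℝ) : Prop := ∀ x, g (x + 1) = g x

/-- The `L^p` norm of a function over `[0,1]^2` (as a value in `[0,∞]`). -/
noncomputable def lpNorm2 (p : ℝ) (f : ℝ → ℝ → ℝ) : ℝ≥0∞ :=
  (∫⁻ x in Set.Icc (0:ℝ) 1, ∫⁻ y in Set.Icc (0:ℝ) 1,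
      ENNReal.ofReal (|f x y| ^ p)) ^ (1 / p)

/-- The `L^p` norm of a function over `[0,1]` (as a value in `[0,∞]`). -/
noncomputable def lpNorm1 (p : ℝ) (g : ℝ → ℝ) : ℝ≥0∞ :=
  (∫⁻ x in Set.Icc (0:ℝ) 1, ENNReal.ofReal (|g x| ^ p)) ^ (1 / p)

/-- Membership in `L^p([0,1]^2)`: measurable, 1-periodic in each variable,
finite `L^p` norm. -/
def MemLp2 (p : ℝ) (f : ℝ → ℝ → ℝ) : Prop :=
  Measurable (Function.uncurry f) ∧ BiPeriodic f ∧ lpNorm2 p f < ⊤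

/-- Membership in `L^p([0,1])` for 1-periodic functions of one variable. -/
def MemLp1 (p : ℝ) (g : ℝ → ℝ) : Prop :=
  Measurable g ∧ Periodic1 g ∧ lpNorm1 p g < ⊤

/-- The (total) `L^p` modulus of continuity `ω(f;δ)_p` of a bivariate function. -/
noncomputable def modulus2 (p : ℝ) (f : ℝ → ℝ → ℝ) (δ : ℝ) : ℝ≥0∞ :=
  ⨆ (h : ℝ × ℝ) (_ : Real.sqrt (h.1 ^ 2 + h.2 ^ 2) ≤ δ),
    lpNorm2 p (fun x y => f (x + h.1) (y + h.2) - f x y)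

/-- The `L^p` modulus of continuity `ω(g;δ)_p` of a univariate function. -/
noncomputable def modulus1 (p : ℝ) (g : ℝ → ℝ) (δ : ℝ) : ℝ≥0∞ :=
  ⨆ (h : ℝ) (_ : h ∈ Set.Icc 0 δ), lpNorm1 p (fun x => g (x + h) - g x)

/-- The mixed `L^p` modulus of continuity `ω(f;u,v)_p`. -/
noncomputable def mixedModulus (p : ℝ) (f : ℝ → ℝ → ℝ) (u v : ℝ) : ℝ≥0∞ :=
  ⨆ (s : ℝ) (_ : s ∈ Set.Icc 0 u) (t : ℝ) (_ : t ∈ Set.Icc 0 v),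
    lpNorm2 p (fun x y => f (x + s) (y + t) - f (x + s) y - f x (y + t) + f x y)

/-- `J_p(f) = ∫₀¹ t^{-1/p} ω(f;t)_p dt/t`. -/
noncomputable def Jp (p : ℝ) (f : ℝ → ℝ → ℝ) : ℝ≥0∞ :=
  ∫⁻ t in Set.Ioc (0:ℝ) 1, ENNReal.ofReal (t ^ (-(1/p)) / t) * modulus2 p f t

/-- `K_p(f) = ∫₀¹ t^{-1/p} [ω(f;t,1)_p + ω(f;1,t)_p] dt/t`. -/
noncomputable def Kp (p : ℝ) (f : ℝ → ℝ → ℝ) : ℝ≥0∞ :=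
  ∫⁻ t in Set.Ioc (0:ℝ) 1,
    ENNReal.ofReal (t ^ (-(1/p)) / t) * (mixedModulus p f t 1 + mixedModulus p f 1 t)

/-- `I_p(f) = ∫₀¹∫₀¹ (uv)^{-1/p} ω(f;u,v)_p (du/u)(dv/v)`. -/
noncomputable def Ip (p : ℝ) (f : ℝ → ℝ → ℝ) : ℝ≥0∞ :=
  ∫⁻ u in Set.Ioc (0:ℝ) 1, ∫⁻ v in Set.Ioc (0:ℝ) 1,
    ENNReal.ofReal ((u * v) ^ (-(1/p)) / (u * v)) * mixedModulus p f u v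

/-- The essential supremum norm of `f` over `[0,1]^2`. -/
noncomputable def supNorm2 (f : ℝ → ℝ → ℝ) : ℝ≥0∞ :=
  essSup (fun z : ℝ × ℝ => ENNReal.ofReal |f z.1 z.2|)
    (volume.restrict ((Set.Icc (0:ℝ) 1) ×ˢ (Set.Icc (0:ℝ) 1)))

/-- The Wiener `p`-variation of a 1-periodic function `g`, as a value in `[0,∞]`:
the supremum over partitions `x₀ < x₁ < ... < xₙ = x₀ + 1` of
`(∑ |g(x_{k+1}) - g(x_k)|^p)^{1/p}`. -/
noncomputable def vp (p : ℝ) (g : ℝ → ℝ) : ℝ≥0∞ :=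
  ⨆ (n : ℕ) (x : ℕ → ℝ) (_ : ∀ i < n, x i < x (i + 1)) (_ : x n = x 0 + 1),
    ENNReal.ofReal ((∑ k ∈ Finset.range n, |g (x (k + 1)) - g (x k)| ^ p) ^ (1 / p))

/-- The Hardy–Vitali type total `p`-variation of a bivariate function,
as a value in `[0,∞]`: the supremum over nets of
`(∑∑ |Δf(x_i,y_j)|^p)^{1/p}`. -/
noncomputable def vp2 (p : ℝ) (f : ℝ → ℝ → ℝ) : ℝ≥0∞ :=
  ⨆ (m : ℕ) (n : ℕ) (x : ℕ → ℝ) (y : ℕ → ℝ)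
    (_ : ∀ i < m, x i < x (i + 1)) (_ : x m = x 0 + 1)
    (_ : ∀ j < n, y j < y (j + 1)) (_ : y n = y 0 + 1),
    ENNReal.ofReal ((∑ i ∈ Finset.range m, ∑ j ∈ Finset.range n,
      |f (x (i + 1)) (y (j + 1)) - f (x (i + 1)) (y j)
        - f (x i) (y (j + 1)) + f (x i) (y j)| ^ p) ^ (1 / p))

/-- Membership in the Hardy class `H_p^{(2)}`: finite Vitali `p`-variation and
all linear sections of bounded `p`-variation. -/
def MemHp2 (p : ℝ) (f : ℝ → ℝ → ℝ) : Prop :=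
  vp2 p f < ⊤ ∧ (∀ x, vp p (fun y => f x y) < ⊤) ∧ (∀ y, vp p (fun x => f x y) < ⊤)

/-- Membership in the mixed norm class `V_p[V_p]`: all sections have bounded
`p`-variation and the functions `x ↦ v_p(f_x)`, `y ↦ v_p(f_y)` are themselves
of bounded `p`-variation. -/
def MemVpVp (p : ℝ) (f : ℝ → ℝ → ℝ) : Prop :=
  (∀ x, vp p (fun y => f x y) < ⊤) ∧ (∀ y, vp p (fun x => f x y) < ⊤) ∧
  vp p (fun x => (vp p (fun y => f x y)).toReal) < ⊤ ∧
  vp p (fun y => (vp p (fun x => f x y)).toReal) < ⊤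

/-- `W_p(f) = v_p(φ_p[f]) + v_p(ψ_p[f])`, where `φ_p[f](x) = v_p(f_x)` and
`ψ_p[f](y) = v_p(f_y)`. -/
noncomputable def Wp (p : ℝ) (f : ℝ → ℝ → ℝ) : ℝ≥0∞ :=
  vp p (fun x => (vp p (fun y => f x y)).toReal)
    + vp p (fun y => (vp p (fun x => f x y)).toReal)

/-- Membership in `L^p_0([0,1]^2)`: membership in `L^p([0,1]^2)` together with
vanishing of the linear mean values `∫₀¹ f(x,t) dt` and `∫₀¹ f(t,y) dt` for a.e.
`x` resp. `y`. -/
def MemLp20 (p : ℝ) (f : ℝ → ℝ → ℝ) : Prop :=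
  MemLp2 p f ∧ (∀ᵐ x : ℝ ∂volume, ∫ t in (0:ℝ)..1, f x t = 0) ∧
    (∀ᵐ y : ℝ ∂volume, ∫ t in (0:ℝ)..1, f t y = 0)

/-- `T` is a trigonometric polynomial of degree `(n,m)` in two variables. -/
def IsTrigPoly2 (n m : ℕ) (T : ℝ → ℝ → ℝ) : Prop :=
  ∃ a b c d : ℕ → ℕ → ℝ, ∀ x y : ℝ,
    T x y = ∑ j ∈ Finset.range (n + 1), ∑ k ∈ Finset.range (m + 1),
      (a j k * Real.cos (2 * Real.pi * j * x) * Real.cos (2 * Real.pi * k * y)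
        + b j k * Real.cos (2 * Real.pi * j * x) * Real.sin (2 * Real.pi * k * y)
        + c j k * Real.sin (2 * Real.pi * j * x) * Real.cos (2 * Real.pi * k * y)
        + d j k * Real.sin (2 * Real.pi * j * x) * Real.sin (2 * Real.pi * k * y))

end


open MeasureTheory Filter Set
open scoped ENNReal

lemma hol_aux {α : Type*} [MeasurableSpace α] {p : ℝ} (hp : 1 < p) (μ : Measure α) {F : α → ℝ≥0∞}
    (hF : AEMeasurable F μ) :
    (∫⁻ a, F a ∂μ) ^ p ≤ μ univ ^ (p - 1) * ∫⁻ a, F a ^ p ∂μ := by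
  have hc := Real.HolderConjugate.conjExponent hp
  have h := ENNReal.lintegral_mul_le_Lp_mul_Lq μ hc hF (g := fun _ => 1) aemeasurable_const
  have h2 := ENNReal.rpow_le_rpow h (by linarith : 0 ≤ p)
  have hp0 : p ≠ 0 := by linarith
  have e1 : (1 / p) * p = 1 := by field_simp
  have e2 : (1 / p.conjExponent) * p = p - 1 := by
    unfold Real.conjExponent
    have : p - 1 ≠ 0 := by linarith
    field_simp
  rw [ENNReal.mul_rpow_of_nonneg _ _ (by linarith), ← ENNReal.rpow_mul, ← ENNReal.rpow_mul,
    e1, e2, ENNReal.rpow_one] at h2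
  simpa [mul_comm] using h2

lemma jen_aux {α : Type*} [MeasurableSpace α] {p : ℝ} (hp : 1 < p) (μ : Measure α)
    [IsProbabilityMeasure μ] {F : α → ℝ≥0∞} (hF : AEMeasurable F μ) :
    (∫⁻ a, F a ∂μ) ^ p ≤ ∫⁻ a, F a ^ p ∂μ := by
  simpa using hol_aux hp μ hF

lemma two_pow_aux {p : ℝ} (hp : 1 < p) (a b : ℝ) :
    ‖a - b‖ₑ ^ p ≤ 2 ^ (p - 1) * (‖a‖ₑ ^ p + ‖b‖ₑ ^ p) := by
  refine le_trans ?_ (ENNReal.rpow_add_le_mul_rpow_add_rpow _ _ hp.le)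
  exact ENNReal.rpow_le_rpow enorm_sub_le (by linarith)

lemma pt_aux {p : ℝ} (hp : 1 < p) {g g' : ℝ → ℝ} (hg : Measurable g) (hg' : Measurable g')
    (hd : ∀ x y, x ≤ y → ‖g y - g x‖ₑ ≤ ∫⁻ r in Ioc x y, ‖g' r‖ₑ) {h : ℝ} (hh : 0 < h)
    {c x : ℝ} (hx : x ∈ Icc c (c + h)) :
    ‖g x‖ₑ ^ p ≤ 2 ^ (p - 1) * (ENNReal.ofReal h⁻¹ * (∫⁻ r in Ioc c (c + h), ‖g r‖ₑ ^ p)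
      + ENNReal.ofReal (h ^ (p - 1)) * (∫⁻ r in Ioc c (c + h), ‖g' r‖ₑ ^ p)) := by
  set I := ∫⁻ r in Ioc c (c + h), ‖g' r‖ₑ with hI
  have hp0 : 0 ≤ p := by linarith
  have hvol : volume (Ioc c (c + h)) = ENNReal.ofReal h := by simp
  have h1 : ∀ y ∈ Ioc c (c + h), ‖g x‖ₑ ^ p ≤ 2 ^ (p - 1) * (‖g y‖ₑ ^ p + I ^ p) := by
    intro y hy
    refine le_trans ?_ (ENNReal.rpow_add_le_mul_rpow_add_rpow _ _ hp.le)
    refine ENNReal.rpow_le_rpow ?_ hp0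
    have key : ‖g x - g y‖ₑ ≤ I := by
      rcases le_total x y with hxy | hxy
      · rw [enorm_sub_rev]
        refine (hd x y hxy).trans ?_
        exact lintegral_mono_set (Ioc_subset_Ioc hx.1 hy.2)
      · refine (hd y x hxy).trans ?_
        exact lintegral_mono_set (Ioc_subset_Ioc hy.1.le hx.2)
    calc ‖g x‖ₑ = ‖g y + (g x - g y)‖ₑ := by congr 1; ring
      _ ≤ ‖g y‖ₑ + ‖g x - g y‖ₑ := enorm_add_le _ _
      _ ≤ _ := by gcongr
  have h2 : ENNReal.ofReal h * ‖g x‖ₑ ^ p ≤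
      2 ^ (p - 1) * ((∫⁻ r in Ioc c (c + h), ‖g r‖ₑ ^ p) + I ^ p * ENNReal.ofReal h) := by
    calc ENNReal.ofReal h * ‖g x‖ₑ ^ p = ∫⁻ y in Ioc c (c + h), ‖g x‖ₑ ^ p := by
          rw [setLIntegral_const, hvol, mul_comm]
      _ ≤ ∫⁻ y in Ioc c (c + h), 2 ^ (p - 1) * (‖g y‖ₑ ^ p + I ^ p) :=
          setLIntegral_mono' measurableSet_Ioc h1
      _ = _ := by
          rw [lintegral_const_mul' _ _ (by
            apply ENNReal.rpow_ne_top_of_nonneg (by linarith) (by simp))]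
          rw [lintegral_add_right _ measurable_const, setLIntegral_const, hvol]
  have h3 : I ^ p ≤ ENNReal.ofReal (h ^ (p - 1)) * (∫⁻ r in Ioc c (c + h), ‖g' r‖ₑ ^ p) := by
    have := hol_aux hp (volume.restrict (Ioc c (c + h))) (F := fun r => ‖g' r‖ₑ)
      (by fun_prop)
    rwa [Measure.restrict_apply_univ, hvol, ENNReal.ofReal_rpow_of_pos hh] at this
  have hinv : ENNReal.ofReal h⁻¹ * ENNReal.ofReal h = 1 := by
    rw [← ENNReal.ofReal_mul (by positivity), inv_mul_cancel₀ hh.ne', ENNReal.ofReal_one]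
  calc ‖g x‖ₑ ^ p = ENNReal.ofReal h⁻¹ * (ENNReal.ofReal h * ‖g x‖ₑ ^ p) := by
        rw [← mul_assoc, hinv, one_mul]
    _ ≤ ENNReal.ofReal h⁻¹ * (2 ^ (p - 1) * ((∫⁻ r in Ioc c (c + h), ‖g r‖ₑ ^ p) + I ^ p * ENNReal.ofReal h)) := by gcongr
    _ = 2 ^ (p - 1) * (ENNReal.ofReal h⁻¹ * (∫⁻ r in Ioc c (c + h), ‖g r‖ₑ ^ p) + (ENNReal.ofReal h⁻¹ * ENNReal.ofReal h) * I ^ p) := by ring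
    _ ≤ _ := by rw [hinv, one_mul]; gcongr

lemma loc0 {p : ℝ} (hp : 1 < p) {g g' : ℝ → ℝ} (hg : Measurable g) (hg' : Measurable g')
    (hd : ∀ x y, x ≤ y → ‖g y - g x‖ₑ ≤ ∫⁻ r in Ioc x y, ‖g' r‖ₑ) {h : ℝ} (hh : 0 < h)
    {a b ε : ℝ} (H : (ε = 1 ∧ a ≤ b) ∨ (ε = 0 ∧ a + h ≤ b)) :
    ‖g b - ε * g a‖ₑ ^ p ≤ 4 ^ p * (ENNReal.ofReal h⁻¹ * (∫⁻ r in Ioc a b, ‖g r‖ₑ ^ p)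
      + ENNReal.ofReal (h ^ (p - 1)) * (∫⁻ r in Ioc a b, ‖g' r‖ₑ ^ p)) := by
  set R := ENNReal.ofReal h⁻¹ * (∫⁻ r in Ioc a b, ‖g r‖ₑ ^ p)
      + ENNReal.ofReal (h ^ (p - 1)) * (∫⁻ r in Ioc a b, ‖g' r‖ₑ ^ p) with hR
  have hp0 : 0 ≤ p := by linarith
  have one_le : (1 : ℝ≥0∞) ≤ 4 ^ p := ENNReal.one_le_rpow (by norm_num) (by linarith)
  have t1 : (2 : ℝ≥0∞) ^ (p - 1) ≤ 4 ^ p :=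
    (ENNReal.rpow_le_rpow_of_exponent_le (by norm_num) (by linarith : p - 1 ≤ p)).trans
      (ENNReal.rpow_le_rpow (by norm_num) hp0)
  have hb : a + h ≤ b → ‖g b‖ₑ ^ p ≤ 2 ^ (p - 1) * R := by
    intro hab
    refine (pt_aux hp hg hg' hd hh (c := b - h) (x := b) ⟨by linarith, by linarith⟩).trans ?_
    have : Ioc (b - h) (b - h + h) ⊆ Ioc a b := Ioc_subset_Ioc (by linarith) (by linarith)
    rw [hR]
    gcongr <;> exact this
  have ha : a + h ≤ b → ‖g a‖ₑ ^ p ≤ 2 ^ (p - 1) * R := by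
    intro hab
    refine (pt_aux hp hg hg' hd hh (c := a) (x := a) ⟨by linarith, by linarith⟩).trans ?_
    have : Ioc a (a + h) ⊆ Ioc a b := Ioc_subset_Ioc (by linarith) (by linarith)
    rw [hR]
    gcongr <;> exact this
  rcases H with ⟨rfl, hab⟩ | ⟨rfl, hab⟩
  · rw [one_mul]
    rcases le_total (a + h) b with h1 | h1
    · calc ‖g b - g a‖ₑ ^ p ≤ 2 ^ (p - 1) * (‖g b‖ₑ ^ p + ‖g a‖ₑ ^ p) := two_pow_aux hp _ _
        _ ≤ 2 ^ (p - 1) * (2 ^ (p - 1) * R + 2 ^ (p - 1) * R) := by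
            gcongr
            · exact hb h1
            · exact ha h1
        _ = (2 ^ (p - 1) * 2 ^ (p - 1) * 2) * R := by ring
        _ ≤ 4 ^ p * R := by
            gcongr
            have e : (4 : ℝ≥0∞) ^ p = 2 ^ p * 2 ^ p := by
              rw [← ENNReal.mul_rpow_of_nonneg _ _ hp0]; norm_num
            have e2 : (2 : ℝ≥0∞) ^ (p - 1) * 2 = 2 ^ p := by
              conv_lhs => rw [← ENNReal.rpow_one 2, ← ENNReal.rpow_mul, ← ENNReal.rpow_add _ _ (by simp) (by simp)]
              congr 1; ring
            rw [e, mul_assoc, e2]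
            gcongr
            · norm_num
            · linarith
    · calc ‖g b - g a‖ₑ ^ p ≤ (∫⁻ r in Ioc a b, ‖g' r‖ₑ) ^ p :=
            ENNReal.rpow_le_rpow (hd a b hab) hp0
        _ ≤ volume (Ioc a b) ^ (p - 1) * (∫⁻ r in Ioc a b, ‖g' r‖ₑ ^ p) := by
            have := hol_aux hp (volume.restrict (Ioc a b)) (F := fun r => ‖g' r‖ₑ) (by fun_prop)
            rwa [Measure.restrict_apply_univ] at this
        _ ≤ ENNReal.ofReal (h ^ (p - 1)) * (∫⁻ r in Ioc a b, ‖g' r‖ₑ ^ p) := by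
            gcongr
            rw [← ENNReal.ofReal_rpow_of_pos hh, Real.volume_Ioc]
            refine ENNReal.rpow_le_rpow (ENNReal.ofReal_le_ofReal (by linarith)) (by linarith)
        _ ≤ R := le_add_self
        _ ≤ 4 ^ p * R := le_mul_of_one_le_left (zero_le) one_le
  · rw [zero_mul, sub_zero]
    refine (hb hab).trans ?_
    gcongr

open MeasureTheory Filter Set
open scoped ENNReal

/-- uniform probability on (0,h] -/
noncomputable def unif (h : ℝ) : Measure ℝ := (ENNReal.ofReal h)⁻¹ • volume.restrict (Ioc 0 h)

noncomputable def km (κ : Bool) (h : ℝ) : Measure ℝ := if κ then unif h else Measure.dirac h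

noncomputable def Mop (μ : Measure ℝ) (w : ℝ → ℝ) (x : ℝ) : ℝ := ∫ s, (w (x + s) - w x) ∂μ

lemma unif_prob {h : ℝ} (hh : 0 < h) : IsProbabilityMeasure (unif h) := by
  constructor
  simp only [unif, Measure.smul_apply, Measure.restrict_apply_univ, Real.volume_Ioc, sub_zero,
    smul_eq_mul]
  exact ENNReal.inv_mul_cancel (by simpa using hh) (by simp)

lemma km_prob {h : ℝ} (hh : 0 < h) (κ : Bool) : IsProbabilityMeasure (km κ h) := by
  cases κ
  · simp only [km]; simp; infer_instance
  · simpa [km] using unif_prob hh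

lemma km_supp {h : ℝ} (hh : 0 < h) (κ : Bool) : ∀ᵐ s ∂(km κ h), s ∈ Icc 0 h := by
  cases κ
  · simp only [km, Bool.false_eq_true, if_false]
    exact (ae_dirac_iff (p := fun s => s ∈ Icc 0 h) measurableSet_Icc).2 ⟨hh.le, le_rfl⟩
  · simp only [km, if_true, unif]
    apply Measure.ae_smul_measure
    filter_upwards [ae_restrict_mem measurableSet_Ioc] with s hs using ⟨hs.1.le, hs.2⟩

lemma integral_unif {h : ℝ} (hh : 0 < h) (w : ℝ → ℝ) :
    ∫ s, w s ∂(unif h) = h⁻¹ * ∫ s in (0:ℝ)..h, w s := by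
  rw [unif, integral_smul_measure, intervalIntegral.integral_of_le hh.le]
  simp [hh.le]

lemma loc_int {w : ℝ → ℝ} (hw : LocallyIntegrable w) (a b : ℝ) : IntervalIntegrable w volume a b :=
  (hw.integrableOn_isCompact isCompact_uIcc).intervalIntegrable

lemma loc_shift {w : ℝ → ℝ} (hw : LocallyIntegrable w) (x : ℝ) :
    LocallyIntegrable (fun s => w (x + s)) := by
  have hmp : MeasurePreserving (fun s : ℝ => x + s) := measurePreserving_add_left volume x
  intro s
  obtain ⟨U, hU, hi⟩ := hw (x + s)
  refine ⟨(fun s : ℝ => x + s) ⁻¹' U, (continuous_const.add continuous_id).continuousAt hU, ?_⟩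
  exact (hmp.integrableOn_comp_preimage (MeasurableEquiv.addLeft x).measurableEmbedding).2 hi

lemma int_unif {w : ℝ → ℝ} (hw : LocallyIntegrable w) {h : ℝ} (hh : 0 < h) (x : ℝ) :
    Integrable (fun s => w (x + s)) (unif h) := by
  unfold unif
  apply Integrable.smul_measure _ (by simpa using hh)
  exact (((loc_shift hw x).integrableOn_isCompact isCompact_Icc).mono_set Ioc_subset_Icc_self)

lemma int_km {w : ℝ → ℝ} (hwm : Measurable w) (hw : LocallyIntegrable w) {h : ℝ} (hh : 0 < h)
    (κ : Bool) (x : ℝ) : Integrable (fun s => w (x + s)) (km κ h) := by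
  cases κ
  · simp only [km, Bool.false_eq_true, if_false]
    exact integrable_dirac (by simp)
  · simpa [km] using int_unif hw hh x

lemma meas_int_km {w : ℝ → ℝ} (hwm : Measurable w) {h : ℝ} (hh : 0 < h)
    (κ : Bool) : Measurable (fun x => ∫ s, w (x + s) ∂(km κ h)) := by
  have := km_prob hh κ
  have : StronglyMeasurable (fun z : ℝ × ℝ => w (z.1 + z.2)) :=
    (hwm.comp (measurable_fst.add measurable_snd)).stronglyMeasurable
  exact this.integral_prod_right'.measurable

lemma Mop_eq {w : ℝ → ℝ} (hwm : Measurable w) (hw : LocallyIntegrable w) {h : ℝ} (hh : 0 < h)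
    (κ : Bool) (x : ℝ) : Mop (km κ h) w x = (∫ s, w (x + s) ∂(km κ h)) - w x := by
  have := km_prob hh κ
  unfold Mop
  rw [integral_sub (int_km hwm hw hh κ x) (integrable_const _)]
  simp

lemma Mop_meas {w : ℝ → ℝ} (hwm : Measurable w) (hw : LocallyIntegrable w) {h : ℝ} (hh : 0 < h)
    (κ : Bool) : Measurable (Mop (km κ h) w) := by
  have : Mop (km κ h) w = fun x => (∫ s, w (x + s) ∂(km κ h)) - w x := by
    ext x; exact Mop_eq hwm hw hh κ x
  rw [this]
  exact (meas_int_km hwm hh κ).sub hwm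

lemma Mop_dirac (w : ℝ → ℝ) (h x : ℝ) : Mop (km false h) w x = w (x + h) - w x := by
  simp [Mop, km]

lemma avg_diff {w : ℝ → ℝ} (hw : LocallyIntegrable w) {h : ℝ} (hh : 0 < h) (x y : ℝ) :
    (∫ s, w (y + s) ∂(unif h)) - ∫ s, w (x + s) ∂(unif h)
      = ∫ r in x..y, h⁻¹ * (w (r + h) - w r) := by
  rw [integral_unif hh, integral_unif hh, intervalIntegral.integral_const_mul,
    intervalIntegral.integral_sub]
  · simp only [intervalIntegral.integral_comp_add_left, intervalIntegral.integral_comp_add_right]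
    have h1 := intervalIntegral.integral_add_adjacent_intervals (loc_int hw x y) (loc_int hw y (y + h))
    have h2 := intervalIntegral.integral_add_adjacent_intervals (loc_int hw x (x+h)) (loc_int hw (x+h) (y + h))
    simp only [add_zero]
    rw [← mul_sub]
    congr 1
    linarith
  · have := loc_int (loc_shift hw h) x y
    simpa [add_comm] using this
  · exact loc_int hw x y

lemma L1 {p : ℝ} (hp : 1 < p) {w : ℝ → ℝ} (hwm : Measurable w) (hw : LocallyIntegrable w)
    {T : Bool → ℝ} (hT0 : 0 < T false) (hT1 : T false ≤ 1)
    (hT : T true = T false * 2 ^ (-(p * (p / (p - 1))))) {a b ε : ℝ}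
    (H : (ε = 1 ∧ a ≤ b) ∨ (ε = 0 ∧ a + 1 = b)) :
    ‖((∫ s, w (b + s) ∂(unif (T true))) - ∫ s, w (b + s) ∂(unif (T false)))
      - ε * ((∫ s, w (a + s) ∂(unif (T true))) - ∫ s, w (a + s) ∂(unif (T false)))‖ₑ ^ p
    ≤ 16 ^ p * ∑ κ : Bool, ∑ c : Bool, ENNReal.ofReal (T c)⁻¹ *
      ∫⁻ x in Ioc a b, ‖Mop (km κ (T c)) w x‖ₑ ^ p := by
  have hp0 : 0 < p := by linarith
  have hp1 : 0 < p - 1 := by linarith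
  set t := T false with ht
  set t' := T true with ht'
  have ht'0 : 0 < t' := by rw [hT]; positivity
  set g : ℝ → ℝ := fun x => (∫ s, w (x + s) ∂(unif t')) - ∫ s, w (x + s) ∂(unif t) with hg
  set g' : ℝ → ℝ := fun x => t'⁻¹ * (w (x + t') - w x) - t⁻¹ * (w (x + t) - w x) with hg'
  have gm : Measurable g := by
    have h1 := meas_int_km hwm ht'0 true
    have h2 := meas_int_km hwm hT0 true
    simp only [km, if_true] at h1 h2
    exact h1.sub h2
  have gm' : Measurable g' := by
    have : Measurable w := hwm
    simp only [hg']
    fun_prop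
  have hii : ∀ (h x y : ℝ), IntervalIntegrable (fun r => h⁻¹ * (w (r + h) - w r)) volume x y := by
    intro h x y
    apply IntervalIntegrable.const_mul
    apply IntervalIntegrable.sub
    · have := loc_int (loc_shift hw h) x y
      simpa [add_comm] using this
    · exact loc_int hw x y
  have hd : ∀ x y, x ≤ y → ‖g y - g x‖ₑ ≤ ∫⁻ r in Ioc x y, ‖g' r‖ₑ := by
    intro x y hxy
    have e : g y - g x = ∫ r in x..y, g' r := by
      simp only [hg, hg']
      rw [intervalIntegral.integral_sub (hii t' x y) (hii t x y), ← avg_diff hw ht'0,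
        ← avg_diff hw hT0]
      ring
    rw [e, intervalIntegral.integral_of_le hxy]
    exact enorm_integral_le_lintegral_enorm _
  set h := t * 2 ^ (-p) with hh
  have hpos : 0 < h := by positivity
  have hle : h ≤ t := by
    rw [hh]
    apply mul_le_of_le_one_right hT0.le
    apply Real.rpow_le_one_of_one_le_of_nonpos <;> linarith
  have ht't : t' ≤ t := by
    rw [hT]
    apply mul_le_of_le_one_right hT0.le
    apply Real.rpow_le_one_of_one_le_of_nonpos
    · norm_num
    · have : 0 < p * (p / (p - 1)) := by positivity
      linarith
  have H' : (ε = 1 ∧ a ≤ b) ∨ (ε = 0 ∧ a + h ≤ b) := by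
    rcases H with H | ⟨H1, H2⟩
    · exact Or.inl H
    · exact Or.inr ⟨H1, by linarith⟩
  have main := loc0 hp gm gm' hd hpos H'
  set I : Bool → ℝ → ℝ≥0∞ := fun κ c => ∫⁻ x in Ioc a b, ‖Mop (km κ c) w x‖ₑ ^ p with hI
  have split : ∀ (κ : Bool) (A B : ℝ≥0∞) (hA : A ≠ ⊤) (hB : B ≠ ⊤),
      ∫⁻ x in Ioc a b, (2 ^ p * (A * ‖Mop (km κ t') w x‖ₑ ^ p + B * ‖Mop (km κ t) w x‖ₑ ^ p))
      = 2 ^ p * (A * I κ t' + B * I κ t) := by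
    intro κ A B hA hB
    rw [lintegral_const_mul' _ _ (ENNReal.rpow_ne_top_of_nonneg hp0.le (by simp)),
      lintegral_add_left, lintegral_const_mul' _ _ hA, lintegral_const_mul' _ _ hB]
    have := Mop_meas hwm hw ht'0 κ
    fun_prop
  have two : (2 : ℝ≥0∞) ^ (p - 1) ≤ 2 ^ p :=
    ENNReal.rpow_le_rpow_of_exponent_le (by norm_num) (by linarith)
  have b1 : (∫⁻ r in Ioc a b, ‖g r‖ₑ ^ p) ≤ 2 ^ p * (1 * I true t' + 1 * I true t) := by
    rw [← split true 1 1 (by simp) (by simp)]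
    apply lintegral_mono
    intro x
    have : g x = Mop (km true t') w x - Mop (km true t) w x := by
      rw [Mop_eq hwm hw ht'0, Mop_eq hwm hw hT0]
      simp [hg, km]
    beta_reduce
    rw [this]
    refine (two_pow_aux hp _ _).trans ?_
    simp only [one_mul]
    gcongr
  have enm : ∀ c : ℝ, 0 < c → ∀ z : ℝ, ‖c⁻¹ * z‖ₑ ^ p = ENNReal.ofReal (c⁻¹ ^ p) * ‖z‖ₑ ^ p := by
    intro c hc z
    rw [enorm_mul, ENNReal.mul_rpow_of_nonneg _ _ hp0.le, Real.enorm_eq_ofReal (by positivity),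
      ENNReal.ofReal_rpow_of_pos (by positivity)]
  have b2 : (∫⁻ r in Ioc a b, ‖g' r‖ₑ ^ p) ≤ 2 ^ p * (ENNReal.ofReal (t'⁻¹ ^ p) * I false t' +
      ENNReal.ofReal (t⁻¹ ^ p) * I false t) := by
    rw [← split false _ _ (by simp) (by simp)]
    apply lintegral_mono
    intro x
    simp only [hg', Mop_dirac]
    refine (two_pow_aux hp _ _).trans ?_
    rw [enm t' ht'0, enm t hT0]
    gcongr
  have two_eq : (2 : ℝ≥0∞) ^ p = ENNReal.ofReal (2 ^ p) := by
    rw [← ENNReal.ofReal_rpow_of_pos (by norm_num)]; simp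
  have hinv : h⁻¹ = 2 ^ p * t⁻¹ := by
    rw [hh, mul_inv, Real.rpow_neg (by norm_num), inv_inv, mul_comm]
  have c1 : ENNReal.ofReal h⁻¹ ≤ 2 ^ p * ENNReal.ofReal t⁻¹ := by
    rw [two_eq, ← ENNReal.ofReal_mul (by positivity), hinv]
  have c2 : ENNReal.ofReal h⁻¹ ≤ 2 ^ p * ENNReal.ofReal t'⁻¹ := by
    refine c1.trans ?_
    gcongr
  have c3 : ENNReal.ofReal (h ^ (p - 1)) * ENNReal.ofReal (t⁻¹ ^ p) ≤ 2 ^ p * ENNReal.ofReal t⁻¹ := by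
    rw [two_eq, ← ENNReal.ofReal_mul (by positivity), ← ENNReal.ofReal_mul (by positivity)]
    apply ENNReal.ofReal_le_ofReal
    calc h ^ (p - 1) * t⁻¹ ^ p ≤ t ^ (p - 1) * t⁻¹ ^ p := by gcongr
      _ = t⁻¹ := by
        rw [Real.inv_rpow hT0.le, Real.rpow_sub hT0, Real.rpow_one]
        have : t ^ p ≠ 0 := by positivity
        field_simp
      _ ≤ 2 ^ p * t⁻¹ := by
        apply le_mul_of_one_le_left (by positivity)
        exact Real.one_le_rpow (by norm_num) hp0.le
  have c4 : ENNReal.ofReal (h ^ (p - 1)) * ENNReal.ofReal (t'⁻¹ ^ p) ≤ 2 ^ p * ENNReal.ofReal t'⁻¹ := by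
    rw [two_eq, ← ENNReal.ofReal_mul (by positivity), ← ENNReal.ofReal_mul (by positivity)]
    apply ENNReal.ofReal_le_ofReal
    have e : h = t' * 2 ^ (p / (p - 1)) := by
      rw [hT, hh, mul_assoc, ← Real.rpow_add (by norm_num)]
      congr 2
      field_simp
      ring
    have e2 : h ^ (p - 1) = t' ^ (p - 1) * 2 ^ p := by
      rw [e, Real.mul_rpow ht'0.le (by positivity), ← Real.rpow_mul (by norm_num)]
      congr 2
      field_simp
    apply le_of_eq
    rw [e2, Real.inv_rpow ht'0.le, Real.rpow_sub ht'0, Real.rpow_one]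
    have : t' ^ p ≠ 0 := by positivity
    field_simp
  have e16 : (16 : ℝ≥0∞) ^ p = 4 ^ p * (2 ^ p * 2 ^ p) := by
    rw [← ENNReal.mul_rpow_of_nonneg _ _ hp0.le, ← ENNReal.mul_rpow_of_nonneg _ _ hp0.le]
    norm_num
  refine main.trans ?_
  calc _ ≤ 4 ^ p * (ENNReal.ofReal h⁻¹ * (2 ^ p * (1 * I true t' + 1 * I true t)) +
        ENNReal.ofReal (h ^ (p - 1)) * (2 ^ p * (ENNReal.ofReal (t'⁻¹ ^ p) * I false t' +
      ENNReal.ofReal (t⁻¹ ^ p) * I false t))) := by gcongr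
    _ = 4 ^ p * (2 ^ p * (ENNReal.ofReal h⁻¹ * I true t' + ENNReal.ofReal h⁻¹ * I true t
        + (ENNReal.ofReal (h ^ (p - 1)) * ENNReal.ofReal (t'⁻¹ ^ p)) * I false t'
        + (ENNReal.ofReal (h ^ (p - 1)) * ENNReal.ofReal (t⁻¹ ^ p)) * I false t)) := by ring
    _ ≤ 4 ^ p * (2 ^ p * ((2 ^ p * ENNReal.ofReal t'⁻¹) * I true t' + (2 ^ p * ENNReal.ofReal t⁻¹) * I true t
        + (2 ^ p * ENNReal.ofReal t'⁻¹) * I false t'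
        + (2 ^ p * ENNReal.ofReal t⁻¹) * I false t)) := by gcongr
    _ = 16 ^ p * ∑ κ : Bool, ∑ c : Bool, ENNReal.ofReal (T c)⁻¹ * I κ (T c) := by
        rw [e16]
        simp only [Fintype.sum_bool]
        rw [← ht, ← ht']
        ring
    _ = _ := rfl

open MeasureTheory Filter Set
open scoped ENNReal

structure Good (f : ℝ → ℝ → ℝ) : Prop where
  meas : Measurable (Function.uncurry f)
  secx : ∀ x, LocallyIntegrable (f x)
  secy : ∀ y, LocallyIntegrable (fun x => f x y)
  joint : LocallyIntegrable (Function.uncurry f) (volume : Measure (ℝ × ℝ))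

lemma loc_comp {X Y : Type*} [TopologicalSpace X] [TopologicalSpace Y] [MeasurableSpace X]
    [MeasurableSpace Y] [BorelSpace X] [BorelSpace Y] {μ : Measure X} {ν : Measure Y} (e : X ≃ₜ Y)
    (he : MeasurePreserving e μ ν) {f : Y → ℝ} (hf : LocallyIntegrable f ν) :
    LocallyIntegrable (fun x => f (e x)) μ := by
  intro s
  obtain ⟨U, hU, hi⟩ := hf (e s)
  refine ⟨e ⁻¹' U, e.continuous.continuousAt hU, ?_⟩
  exact (he.integrableOn_comp_preimage e.measurableEmbedding).2 hi

lemma Good.swap {f : ℝ → ℝ → ℝ} (hf : Good f) : Good (fun y x => f x y) where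
  meas := hf.meas.comp measurable_swap
  secx := hf.secy
  secy := hf.secx
  joint := by
    have : MeasurePreserving (Homeomorph.prodComm ℝ ℝ) (volume : Measure (ℝ × ℝ)) volume :=
      Measure.measurePreserving_swap
    exact loc_comp (Homeomorph.prodComm ℝ ℝ) this hf.joint

lemma Good.shift {f : ℝ → ℝ → ℝ} (hf : Good f) (x y : ℝ) : Good (fun s t => f (x + s) (y + t)) where
  meas := by
    have := hf.meas
    exact this.comp (f := fun z : ℝ × ℝ => (x + z.1, y + z.2)) (by fun_prop)
  secx := fun s => loc_shift (hf.secx _) y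
  secy := fun t => loc_shift (hf.secy _) x
  joint := by
    have : MeasurePreserving (Homeomorph.addLeft ((x, y) : ℝ × ℝ)) volume volume :=
      measurePreserving_add_left volume ((x, y) : ℝ × ℝ)
    exact loc_comp (Homeomorph.addLeft ((x, y) : ℝ × ℝ)) this hf.joint

lemma Good.measx {f : ℝ → ℝ → ℝ} (hf : Good f) (x : ℝ) : Measurable (f x) :=
  hf.meas.comp (f := fun y => (x, y)) (by fun_prop)

lemma Good.measy {f : ℝ → ℝ → ℝ} (hf : Good f) (y : ℝ) : Measurable (fun x => f x y) :=
  hf.meas.comp (f := fun x => (x, y)) (by fun_prop)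

lemma Good.int_box {f : ℝ → ℝ → ℝ} (hf : Good f) (a b c d : ℝ) :
    Integrable (Function.uncurry f) ((volume.restrict (Ioc a b)).prod (volume.restrict (Ioc c d))) := by
  rw [Measure.prod_restrict]
  have : IntegrableOn (Function.uncurry f) (Icc a b ×ˢ Icc c d) (volume : Measure (ℝ × ℝ)) :=
    hf.joint.integrableOn_isCompact (isCompact_Icc.prod isCompact_Icc)
  exact this.mono_set (prod_mono Ioc_subset_Icc_self Ioc_subset_Icc_self)

lemma Good.int_half {f : ℝ → ℝ → ℝ} (hf : Good f) (a b : ℝ) {k : ℝ} (hk : 0 < k) (κ : Bool) :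
    Integrable (Function.uncurry f) ((volume.restrict (Ioc a b)).prod (km κ k)) := by
  cases κ
  · simp only [km, Bool.false_eq_true, if_false]
    rw [Measure.prod_dirac, integrable_map_measure hf.meas.aestronglyMeasurable (by fun_prop)]
    exact ((hf.secy k).integrableOn_isCompact isCompact_Icc).mono_set Ioc_subset_Icc_self
  · simp only [km, if_true, unif]
    rw [Measure.prod_smul_right]
    exact (hf.int_box a b 0 k).smul_measure (by simpa using hk)

lemma Good.int_prod {f : ℝ → ℝ → ℝ} (hf : Good f) {h k : ℝ} (hh : 0 < h) (hk : 0 < k) (κ κ' : Bool) :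
    Integrable (Function.uncurry f) ((km κ h).prod (km κ' k)) := by
  have := km_prob hk κ'
  cases κ
  · rw [show km false h = Measure.dirac h from rfl]
    rw [Measure.dirac_prod, integrable_map_measure hf.meas.aestronglyMeasurable (by fun_prop)]
    have := int_km (hf.measx h) (hf.secx h) hk κ' 0
    simp only [zero_add] at this
    exact this
  · rw [show km true h = unif h from rfl, unif]
    rw [Measure.prod_smul_left]
    exact (hf.int_half 0 h hk κ').smul_measure (by simpa using hh)

lemma Good.loc_avg {f : ℝ → ℝ → ℝ} (hf : Good f) {k : ℝ} (hk : 0 < k) (κ : Bool) (y : ℝ) :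
    LocallyIntegrable (fun x => ∫ t, f x (y + t) ∂(km κ k)) := by
  have := km_prob hk κ
  intro x
  refine ⟨Ioc (x - 1) (x + 1), Ioc_mem_nhds (by linarith) (by linarith), ?_⟩
  have h := ((hf.shift 0 y).int_half (x - 1) (x + 1) hk κ).integral_prod_left
  simp only [zero_add, Function.uncurry] at h
  exact h

lemma Good.meas_avg {f : ℝ → ℝ → ℝ} (hf : Good f) {k : ℝ} (hk : 0 < k) (κ : Bool) (y : ℝ) :
    Measurable (fun x => ∫ t, f x (y + t) ∂(km κ k)) := by
  have := km_prob hk κ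
  have : StronglyMeasurable (fun z : ℝ × ℝ => f z.1 (y + z.2)) :=
    (hf.meas.comp (f := fun z : ℝ × ℝ => (z.1, y + z.2)) (by fun_prop)).stronglyMeasurable
  exact this.integral_prod_right'.measurable

noncomputable def Eav (f : ℝ → ℝ → ℝ) (h k x y : ℝ) : ℝ :=
  ∫ s, (∫ t, f (x + s) (y + t) ∂(unif k)) ∂(unif h)

noncomputable def Dop (f : ℝ → ℝ → ℝ) (T S : Bool → ℝ) (x y : ℝ) : ℝ :=
  (Eav f (T true) (S true) x y - Eav f (T true) (S false) x y)
    - (Eav f (T false) (S true) x y - Eav f (T false) (S false) x y)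

noncomputable def MM (f : ℝ → ℝ → ℝ) (μ ν : Measure ℝ) (x y : ℝ) : ℝ :=
  Mop ν (fun y => Mop μ (fun x => f x y) x) y

lemma L2 {p : ℝ} (hp : 1 < p) {f : ℝ → ℝ → ℝ} (hf : Good f)
    {T S : Bool → ℝ} (hT0 : 0 < T false) (hT1 : T false ≤ 1)
    (hT : T true = T false * 2 ^ (-(p * (p / (p - 1))))) (hS0 : 0 < S false) (hS1 : S false ≤ 1)
    (hS : S true = S false * 2 ^ (-(p * (p / (p - 1))))) {a b ε c d δ : ℝ}
    (H : (ε = 1 ∧ a ≤ b) ∨ (ε = 0 ∧ a + 1 = b)) (H' : (δ = 1 ∧ c ≤ d) ∨ (δ = 0 ∧ c + 1 = d)) :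
    ‖(Dop f T S b d - δ * Dop f T S b c) - ε * (Dop f T S a d - δ * Dop f T S a c)‖ₑ ^ p
    ≤ 16 ^ p * ∑ κ : Bool, ∑ i : Bool, ENNReal.ofReal (T i)⁻¹ *
      ∫⁻ x in Ioc a b, (16 ^ p * ∑ κ' : Bool, ∑ j : Bool, ENNReal.ofReal (S j)⁻¹ *
        ∫⁻ y in Ioc c d, ‖MM f (km κ (T i)) (km κ' (S j)) x y‖ₑ ^ p) := by
  have hTp : ∀ i, 0 < T i := by
    intro i; cases i
    · exact hT0
    · rw [hT]; positivity
  have hSp : ∀ i, 0 < S i := by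
    intro i; cases i
    · exact hS0
    · rw [hS]; positivity
  set Q : ℝ → ℝ → ℝ := fun x y => (∫ t, f x (y + t) ∂(unif (S true)))
    - ∫ t, f x (y + t) ∂(unif (S false)) with hQ
  have Qm : ∀ y, Measurable (fun x => Q x y) := fun y =>
    (hf.meas_avg (hSp true) true y).sub (hf.meas_avg (hSp false) true y)
  have Ql : ∀ y, LocallyIntegrable (fun x => Q x y) := fun y =>
    (hf.loc_avg (hSp true) true y).sub (hf.loc_avg (hSp false) true y)
  have hD : ∀ x y, Dop f T S x y = (∫ s, Q (x + s) y ∂(unif (T true)))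
      - ∫ s, Q (x + s) y ∂(unif (T false)) := by
    intro x y
    simp only [Dop, Eav, hQ]
    rw [integral_sub, integral_sub]
    · exact int_unif (hf.loc_avg (hSp true) true y) (hTp false) x
    · exact int_unif (hf.loc_avg (hSp false) true y) (hTp false) x
    · exact int_unif (hf.loc_avg (hSp true) true y) (hTp true) x
    · exact int_unif (hf.loc_avg (hSp false) true y) (hTp true) x
  set w : ℝ → ℝ := fun x => Q x d - δ * Q x c with hw
  have wm : Measurable w := (Qm d).sub ((Qm c).const_mul δ)
  have wl : LocallyIntegrable w := by
    have := (Ql d).sub ((Ql c).smul δ)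
    exact this
  have hwi : ∀ (κ i : Bool) x, ∫ s, w (x + s) ∂(km κ (T i)) =
      (∫ s, Q (x + s) d ∂(km κ (T i))) - δ * ∫ s, Q (x + s) c ∂(km κ (T i)) := by
    intro κ i x
    simp only [hw]
    rw [integral_sub, integral_const_mul]
    · exact int_km (Qm d) (Ql d) (hTp i) κ x
    · exact (int_km (Qm c) (Ql c) (hTp i) κ x).const_mul δ
  have main := L1 hp wm wl hT0 hT1 hT H
  have e : ∀ x, (∫ s, w (x + s) ∂(unif (T true))) - ∫ s, w (x + s) ∂(unif (T false))
      = Dop f T S x d - δ * Dop f T S x c := by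
    intro x
    have h1 := hwi true true x
    have h2 := hwi true false x
    simp only [km, if_true] at h1 h2
    rw [h1, h2, hD, hD]; ring
  rw [e, e] at main
  refine main.trans ?_
  gcongr with κ _ i _ x
  set v : ℝ → ℝ := fun y => Mop (km κ (T i)) (fun x => f x y) x with hv
  have hv' : v = fun y => (∫ s, f (x + s) y ∂(km κ (T i))) - f x y := by
    ext y
    exact Mop_eq (hf.measy y) (hf.secy y) (hTp i) κ x
  have vm1 := hf.swap.meas_avg (hTp i) κ x
  have vl1 := hf.swap.loc_avg (hTp i) κ x
  have vm : Measurable v := by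
    rw [hv']; exact vm1.sub (hf.measx x)
  have vl : LocallyIntegrable v := by
    rw [hv']; exact vl1.sub (hf.secx x)
  have key : ∀ (j : Bool) y, ∫ t, v (y + t) ∂(unif (S j)) =
      (∫ s, (∫ t, f (x + s) (y + t) ∂(unif (S j))) ∂(km κ (T i))) - ∫ t, f x (y + t) ∂(unif (S j)) := by
    intro j y
    have p1 := km_prob (hTp i) κ
    have p2 := unif_prob (hSp j)
    rw [hv', integral_sub (int_unif vl1 (hSp j) y) (int_unif (hf.secx x) (hSp j) y)]
    congr 1
    rw [integral_integral_swap]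
    exact (hf.shift x y).swap.int_prod (hSp j) (hTp i) true κ
  have keyQ : ∀ y, (∫ t, v (y + t) ∂(unif (S true))) - (∫ t, v (y + t) ∂(unif (S false)))
      = (∫ s, Q (x + s) y ∂(km κ (T i))) - Q x y := by
    intro y
    rw [key, key]
    simp only [hQ]
    rw [integral_sub]
    · ring
    · exact int_km (hf.meas_avg (hSp true) true y) (hf.loc_avg (hSp true) true y) (hTp i) κ x
    · exact int_km (hf.meas_avg (hSp false) true y) (hf.loc_avg (hSp false) true y) (hTp i) κ x
  have fin := L1 hp vm vl hS0 hS1 hS H'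
  rw [keyQ, keyQ] at fin
  have e3 : Mop (km κ (T i)) w x = ((∫ s, Q (x + s) d ∂(km κ (T i))) - Q x d)
      - δ * ((∫ s, Q (x + s) c ∂(km κ (T i))) - Q x c) := by
    rw [Mop_eq wm wl (hTp i), hwi]
    simp only [hw]; ring
  rw [e3]
  exact fin

open MeasureTheory Filter Set
open scoped ENNReal

lemma ofReal_abs_rpow {p : ℝ} (hp : 0 ≤ p) (x : ℝ) : ENNReal.ofReal (|x| ^ p) = ‖x‖ₑ ^ p := by
  rw [← ENNReal.ofReal_rpow_of_nonneg (abs_nonneg x) hp, ← Real.norm_eq_abs, ofReal_norm_eq_enorm]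

def Dl (f : ℝ → ℝ → ℝ) (s t x y : ℝ) : ℝ := f (x + s) (y + t) - f (x + s) y - f x (y + t) + f x y

lemma MM_eq {f : ℝ → ℝ → ℝ} (hf : Good f) {u v : ℝ} (hu : 0 < u) (hv : 0 < v) (κ κ' : Bool)
    (x y : ℝ) : MM f (km κ u) (km κ' v) x y = ∫ t, (∫ s, Dl f s t x y ∂(km κ u)) ∂(km κ' v) := by
  have := km_prob hu κ
  have := km_prob hv κ'
  simp only [MM, Mop, Dl]
  congr 1
  ext t
  rw [← integral_sub]
  · congr 1; ext s; ring
  · exact (int_km (hf.measy _) (hf.secy (y + t)) hu κ x).sub (integrable_const _)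
  · exact (int_km (hf.measy _) (hf.secy y) hu κ x).sub (integrable_const _)

lemma Dl_meas {f : ℝ → ℝ → ℝ} (hf : Measurable (Function.uncurry f)) :
    Measurable (fun z : (ℝ × ℝ) × (ℝ × ℝ) => Dl f z.2.2 z.2.1 z.1.1 z.1.2) := by
  unfold Dl
  refine ((Measurable.sub ?_ ?_).sub ?_).add ?_
  · exact hf.comp (f := fun z : (ℝ × ℝ) × (ℝ × ℝ) => (z.1.1 + z.2.2, z.1.2 + z.2.1)) (by fun_prop)
  · exact hf.comp (f := fun z : (ℝ × ℝ) × (ℝ × ℝ) => (z.1.1 + z.2.2, z.1.2)) (by fun_prop)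
  · exact hf.comp (f := fun z : (ℝ × ℝ) × (ℝ × ℝ) => (z.1.1, z.1.2 + z.2.1)) (by fun_prop)
  · exact hf.comp (f := fun z : (ℝ × ℝ) × (ℝ × ℝ) => (z.1.1, z.1.2)) (by fun_prop)

lemma MM_meas {f : ℝ → ℝ → ℝ} (hf : Good f) {u v : ℝ} (hu : 0 < u) (hv : 0 < v) (κ κ' : Bool) :
    Measurable (fun z : ℝ × ℝ => MM f (km κ u) (km κ' v) z.1 z.2) := by
  have := km_prob hu κ
  have := km_prob hv κ'
  simp only [MM_eq hf hu hv]
  apply StronglyMeasurable.measurable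
  apply StronglyMeasurable.integral_prod_right'
    (f := fun w : (ℝ × ℝ) × ℝ => ∫ s, Dl f s w.2 w.1.1 w.1.2 ∂(km κ u))
  apply StronglyMeasurable.integral_prod_right'
    (f := fun w : ((ℝ × ℝ) × ℝ) × ℝ => Dl f w.2 w.1.2 w.1.1.1 w.1.1.2)
  apply Measurable.stronglyMeasurable
  exact (Dl_meas hf.meas).comp
    (f := fun w : ((ℝ × ℝ) × ℝ) × ℝ => ((w.1.1.1, w.1.1.2), (w.1.2, w.2))) (by fun_prop)

lemma lpNorm2_rpow {p : ℝ} (hp : 1 < p) (f : ℝ → ℝ → ℝ) : lpNorm2 p f ^ p =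
    ∫⁻ x in Icc (0:ℝ) 1, ∫⁻ y in Icc (0:ℝ) 1, ‖f x y‖ₑ ^ p := by
  unfold lpNorm2
  rw [← ENNReal.rpow_mul, one_div_mul_cancel (by linarith), ENNReal.rpow_one]
  simp only [ofReal_abs_rpow (by linarith : (0:ℝ) ≤ p)]

lemma le_mixed (p : ℝ) (f : ℝ → ℝ → ℝ) {s t u v : ℝ} (hs : s ∈ Icc 0 u) (ht : t ∈ Icc 0 v) :
    lpNorm2 p (Dl f s t) ≤ mixedModulus p f u v := by
  unfold mixedModulus
  exact le_iSup₂_of_le s hs (le_iSup₂_of_le (f := fun t _ => lpNorm2 p (Dl f s t)) t ht le_rfl)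

lemma L3 {p : ℝ} (hp : 1 < p) {f : ℝ → ℝ → ℝ} (hf : Good f) {u v : ℝ} (hu : 0 < u) (hv : 0 < v)
    (κ κ' : Bool) : ∫⁻ x in Icc (0:ℝ) 1, ∫⁻ y in Icc (0:ℝ) 1, ‖MM f (km κ u) (km κ' v) x y‖ₑ ^ p
      ≤ mixedModulus p f u v ^ p := by
  have i1 := km_prob hu κ
  have i2 := km_prob hv κ'
  have hm := Dl_meas hf.meas
  have pt : ∀ x y, ‖MM f (km κ u) (km κ' v) x y‖ₑ ^ p ≤
      ∫⁻ z, ‖Dl f z.2 z.1 x y‖ₑ ^ p ∂((km κ' v).prod (km κ u)) := by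
    intro x y
    have hm2 : Measurable (fun z : ℝ × ℝ => ‖Dl f z.2 z.1 x y‖ₑ) :=
      (hm.comp (f := fun z : ℝ × ℝ => ((x, y), z)) (by fun_prop)).enorm
    refine le_trans ?_ (jen_aux hp _ hm2.aemeasurable)
    apply ENNReal.rpow_le_rpow _ (by linarith)
    rw [MM_eq hf hu hv, lintegral_prod _ hm2.aemeasurable]
    refine (enorm_integral_le_lintegral_enorm _).trans ?_
    apply lintegral_mono
    intro t
    exact enorm_integral_le_lintegral_enorm _
  calc _ ≤ ∫⁻ x in Icc (0:ℝ) 1, ∫⁻ y in Icc (0:ℝ) 1,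
        ∫⁻ z, ‖Dl f z.2 z.1 x y‖ₑ ^ p ∂((km κ' v).prod (km κ u)) := by
        gcongr with x y; exact pt x y
    _ = ∫⁻ w, ∫⁻ z, ‖Dl f z.2 z.1 w.1 w.2‖ₑ ^ p ∂((km κ' v).prod (km κ u))
        ∂((volume.restrict (Icc (0:ℝ) 1)).prod (volume.restrict (Icc (0:ℝ) 1))) := by
        rw [lintegral_prod]
        apply Measurable.aemeasurable
        apply Measurable.lintegral_prod_right'
          (f := fun q : (ℝ × ℝ) × (ℝ × ℝ) => ‖Dl f q.2.2 q.2.1 q.1.1 q.1.2‖ₑ ^ p)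
        fun_prop
    _ = ∫⁻ z, ∫⁻ w, ‖Dl f z.2 z.1 w.1 w.2‖ₑ ^ p
        ∂((volume.restrict (Icc (0:ℝ) 1)).prod (volume.restrict (Icc (0:ℝ) 1)))
          ∂((km κ' v).prod (km κ u)) := by
        apply lintegral_lintegral_swap
        apply Measurable.aemeasurable
        show Measurable (fun q : (ℝ × ℝ) × (ℝ × ℝ) => ‖Dl f q.2.2 q.2.1 q.1.1 q.1.2‖ₑ ^ p)
        fun_prop
    _ = ∫⁻ z, lpNorm2 p (Dl f z.2 z.1) ^ p ∂((km κ' v).prod (km κ u)) := by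
        congr 1; ext z
        rw [lpNorm2_rpow hp, lintegral_prod]
        apply Measurable.aemeasurable
        have := (hm.comp (f := fun w : ℝ × ℝ => (w, z)) (by fun_prop)).enorm
        exact this.pow_const p
    _ ≤ ∫⁻ z, mixedModulus p f u v ^ p ∂((km κ' v).prod (km κ u)) := by
        apply lintegral_mono_ae
        have h1 : ∀ᵐ z ∂((km κ' v).prod (km κ u)), z.1 ∈ Icc 0 v :=
          Measure.quasiMeasurePreserving_fst.ae (km_supp hv κ')
        have h2 : ∀ᵐ z ∂((km κ' v).prod (km κ u)), z.2 ∈ Icc 0 u :=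
          Measure.quasiMeasurePreserving_snd.ae (km_supp hu κ)
        filter_upwards [h1, h2] with z hz1 hz2
        exact ENNReal.rpow_le_rpow (le_mixed p f hz2 hz1) (by linarith)
    _ = _ := by simp

lemma per_lint {F : ℝ → ℝ≥0∞} (hF : Function.Periodic F 1) (a : ℝ) :
    ∫⁻ x in Ioc a (a + 1), F x = ∫⁻ x in Icc (0:ℝ) 1, F x := by
  have : VAddInvariantMeasure (AddSubgroup.zmultiples (1:ℝ)) ℝ volume :=
    ⟨fun c s _ => measure_preimage_add _ _ _⟩
  rw [← restrict_Ioc_eq_restrict_Icc]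
  have h := IsAddFundamentalDomain.setLIntegral_eq (G := AddSubgroup.zmultiples (1:ℝ))
    (isAddFundamentalDomain_Ioc one_pos a) (isAddFundamentalDomain_Ioc one_pos 0) F
    hF.map_vadd_zmultiples
  rw [h, zero_add]

lemma MM_per {f : ℝ → ℝ → ℝ} (hf : BiPeriodic f) (μ ν : Measure ℝ) : BiPeriodic (MM f μ ν) := by
  have h1 : ∀ x s y, f (x + 1 + s) y = f (x + s) y := by
    intro x s y; rw [← hf.1 (x + s) y]; congr 1; ring
  have h2 : ∀ x y s, f x (y + 1 + s) = f x (y + s) := by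
    intro x y s; rw [← hf.2 x (y + s)]; congr 1; ring
  constructor
  · intro x y; simp only [MM, Mop, h1, hf.1]
  · intro x y; simp only [MM, Mop, h2, hf.2]

/-- sum of integrals over a net -/
lemma net_sum (F : ℝ → ℝ≥0∞) {m : ℕ} {x : ℕ → ℝ} (hx : ∀ i < m, x i < x (i + 1)) :
    ∑ i ∈ Finset.range m, ∫⁻ r in Ioc (x i) (x (i + 1)), F r = ∫⁻ r in Ioc (x 0) (x m), F r := by
  induction m with
  | zero => simp
  | succ k ih =>
    rw [Finset.sum_range_succ, ih (fun i hi => hx i (by omega))]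
    have hmono : x 0 ≤ x k := by
      have : ∀ j ≤ k, x 0 ≤ x j := by
        intro j hj
        induction j with
        | zero => exact le_rfl
        | succ l ihl => exact (ihl (by omega)).trans (hx l (by omega)).le
      exact this k le_rfl
    rw [← lintegral_union measurableSet_Ioc (Ioc_disjoint_Ioc_of_le le_rfl),
      Ioc_union_Ioc_eq_Ioc hmono (hx k (by omega)).le]


open MeasureTheory Filter Set
open scoped ENNReal

noncomputable def tau (p : ℝ) (n : ℕ) : ℝ := 2 ^ (-(p * (p / (p - 1))) * n)

lemma tau_pos (p : ℝ) (n : ℕ) : 0 < tau p n := by unfold tau; positivity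

lemma tau_zero (p : ℝ) : tau p 0 = 1 := by simp [tau]

lemma tau_succ (p : ℝ) (n : ℕ) : tau p (n + 1) = tau p n * 2 ^ (-(p * (p / (p - 1)))) := by
  unfold tau
  rw [← Real.rpow_add (by norm_num)]
  congr 1; push_cast; ring

lemma tau_le_one {p : ℝ} (hp : 1 < p) (n : ℕ) : tau p n ≤ 1 := by
  unfold tau
  apply Real.rpow_le_one_of_one_le_of_nonpos (by norm_num)
  have h1 : 0 < p - 1 := by linarith
  have : 0 < p * (p / (p - 1)) := by positivity
  have : 0 ≤ p * (p / (p - 1)) * n := by positivity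
  linarith

noncomputable def Tn (p : ℝ) (n : ℕ) : Bool → ℝ := fun c => tau p (n + c.toNat)

noncomputable def XX (p : ℝ) (f : ℝ → ℝ → ℝ) (n m : ℕ) : ℝ≥0∞ :=
  ENNReal.ofReal (tau p n)⁻¹ ^ (1 / p) * ENNReal.ofReal (tau p m)⁻¹ ^ (1 / p)
    * mixedModulus p f (tau p n) (tau p m)

noncomputable def DD (p : ℝ) (f : ℝ → ℝ → ℝ) (n m : ℕ) : ℝ → ℝ → ℝ := Dop f (Tn p n) (Tn p m)

noncomputable def Mb (p : ℝ) (f : ℝ → ℝ → ℝ) (n m : ℕ) : ℝ≥0∞ :=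
  1024 * ∑ i : Bool, ∑ j : Bool, XX p f (n + i.toNat) (m + j.toNat)

lemma sum_bool_rpow {p : ℝ} (hp : 1 < p) (a : Bool → ℝ≥0∞) :
    ∑ i, a i ^ p ≤ (∑ i, a i) ^ p := by
  simp only [Fintype.sum_bool]
  exact ENNReal.add_rpow_le_rpow_add _ _ hp.le

structure NetOK (ε : ℝ) (m : ℕ) (x : ℕ → ℝ) : Prop where
  lt : ∀ i < m, x i < x (i + 1)
  per : x m = x 0 + 1
  cas : ε = 1 ∨ (ε = 0 ∧ m = 1)

lemma NetOK.H {ε : ℝ} {m : ℕ} {x : ℕ → ℝ} (h : NetOK ε m x) {i : ℕ} (hi : i < m) :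
    (ε = 1 ∧ x i ≤ x (i + 1)) ∨ (ε = 0 ∧ x i + 1 = x (i + 1)) := by
  rcases h.cas with h1 | ⟨h1, h2⟩
  · exact Or.inl ⟨h1, (h.lt i hi).le⟩
  · right
    refine ⟨h1, ?_⟩
    subst h2
    obtain rfl : i = 0 := by omega
    exact h.per.symm

lemma L2' {p : ℝ} (hp : 1 < p) {f : ℝ → ℝ → ℝ} (hf : Good f) (n m : ℕ) {a b ε c d δ : ℝ}
    (H : (ε = 1 ∧ a ≤ b) ∨ (ε = 0 ∧ a + 1 = b)) (H' : (δ = 1 ∧ c ≤ d) ∨ (δ = 0 ∧ c + 1 = d)) :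
    ‖(DD p f n m b d - δ * DD p f n m b c) - ε * (DD p f n m a d - δ * DD p f n m a c)‖ₑ ^ p
    ≤ ∑ κ : Bool, ∑ i : Bool, ∑ κ' : Bool, ∑ j : Bool,
      256 ^ p * (ENNReal.ofReal (Tn p n i)⁻¹ * ENNReal.ofReal (Tn p m j)⁻¹) *
      ∫⁻ x in Ioc a b, ∫⁻ y in Ioc c d, ‖MM f (km κ (Tn p n i)) (km κ' (Tn p m j)) x y‖ₑ ^ p := by
  have hT : ∀ n, 0 < Tn p n false := fun n => tau_pos _ _
  have hT0 : ∀ n i, 0 < Tn p n i := fun n i => tau_pos _ _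
  have hT1 : ∀ n, Tn p n false ≤ 1 := fun n => tau_le_one hp _
  have hT2 : ∀ n, Tn p n true = Tn p n false * 2 ^ (-(p * (p / (p - 1)))) := fun n => tau_succ _ _
  refine (L2 hp hf (hT n) (hT1 n) (hT2 n) (hT m) (hT1 m) (hT2 m) H H').trans ?_
  rw [Finset.mul_sum]
  gcongr with κ
  rw [Finset.mul_sum]
  gcongr with i
  have e16 : (16:ℝ≥0∞) ^ p ≠ ⊤ := ENNReal.rpow_ne_top_of_nonneg (by linarith) (by simp)
  have mm : ∀ κ' j, Measurable (fun x => ENNReal.ofReal (Tn p m j)⁻¹ * ∫⁻ y in Ioc c d,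
      ‖MM f (km κ (Tn p n i)) (km κ' (Tn p m j)) x y‖ₑ ^ p) := by
    intro κ' j
    apply Measurable.const_mul
    apply Measurable.lintegral_prod_right'
      (f := fun z : ℝ × ℝ => ‖MM f (km κ (Tn p n i)) (km κ' (Tn p m j)) z.1 z.2‖ₑ ^ p)
    have := MM_meas hf (hT0 n i) (hT0 m j) κ κ'
    fun_prop
  rw [lintegral_const_mul' _ _ e16, lintegral_finsetSum _
    (fun κ' _ => Finset.measurable_fun_sum _ (fun j _ => mm κ' j))]
  simp only [Finset.mul_sum]
  gcongr with κ'
  rw [lintegral_finsetSum _ (fun j _ => mm κ' j)]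
  simp only [Finset.mul_sum]
  refine Finset.sum_le_sum (fun j _ => ?_)
  rw [lintegral_const_mul' _ _ (by simp)]
  have : (256:ℝ≥0∞) ^ p = 16 ^ p * 16 ^ p := by
    rw [← ENNReal.mul_rpow_of_nonneg _ _ (by linarith)]; norm_num
  rw [this]
  apply le_of_eq
  ring

lemma L4 {p : ℝ} (hp : 1 < p) {f : ℝ → ℝ → ℝ} (hf : Good f) (hper : BiPeriodic f) (n m : ℕ)
    {ε δ : ℝ} {M N : ℕ} {x y : ℕ → ℝ} (hx : NetOK ε M x) (hy : NetOK δ N y) :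
    ∑ I ∈ Finset.range M, ∑ J ∈ Finset.range N,
      ‖(DD p f n m (x (I+1)) (y (J+1)) - δ * DD p f n m (x (I+1)) (y J))
        - ε * (DD p f n m (x I) (y (J+1)) - δ * DD p f n m (x I) (y J))‖ₑ ^ p
    ≤ Mb p f n m ^ p := by
  have hT0 : ∀ n i, 0 < Tn p n i := fun n i => tau_pos _ _
  have hp0 : 0 ≤ p := by linarith
  calc _ ≤ ∑ I ∈ Finset.range M, ∑ J ∈ Finset.range N,
        ∑ κ : Bool, ∑ i : Bool, ∑ κ' : Bool, ∑ j : Bool,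
      256 ^ p * (ENNReal.ofReal (Tn p n i)⁻¹ * ENNReal.ofReal (Tn p m j)⁻¹) *
      ∫⁻ r in Ioc (x I) (x (I+1)), ∫⁻ q in Ioc (y J) (y (J+1)),
        ‖MM f (km κ (Tn p n i)) (km κ' (Tn p m j)) r q‖ₑ ^ p := by
        apply Finset.sum_le_sum
        intro I hI
        apply Finset.sum_le_sum
        intro J hJ
        exact L2' hp hf n m (hx.H (Finset.mem_range.1 hI)) (hy.H (Finset.mem_range.1 hJ))
    _ = ∑ κ : Bool, ∑ i : Bool, ∑ κ' : Bool, ∑ j : Bool,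
      256 ^ p * (ENNReal.ofReal (Tn p n i)⁻¹ * ENNReal.ofReal (Tn p m j)⁻¹) *
        ∑ I ∈ Finset.range M, ∑ J ∈ Finset.range N,
      ∫⁻ r in Ioc (x I) (x (I+1)), ∫⁻ q in Ioc (y J) (y (J+1)),
        ‖MM f (km κ (Tn p n i)) (km κ' (Tn p m j)) r q‖ₑ ^ p := by
        simp only [Finset.mul_sum, Fintype.sum_bool, Finset.sum_add_distrib]
    _ ≤ ∑ κ : Bool, ∑ i : Bool, ∑ κ' : Bool, ∑ j : Bool,
        (256 * XX p f (n + i.toNat) (m + j.toNat)) ^ p := by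
        gcongr with κ _ i _ κ' _ j _
        have mm := MM_meas hf (hT0 n i) (hT0 m j) κ κ'
        have mp := MM_per hper (km κ (Tn p n i)) (km κ' (Tn p m j))
        set G := MM f (km κ (Tn p n i)) (km κ' (Tn p m j)) with hG
        have e1 : ∀ I, ∑ J ∈ Finset.range N,
            (∫⁻ r in Ioc (x I) (x (I+1)), ∫⁻ q in Ioc (y J) (y (J+1)), ‖G r q‖ₑ ^ p)
            = ∫⁻ r in Ioc (x I) (x (I+1)), ∫⁻ q in Icc (0:ℝ) 1, ‖G r q‖ₑ ^ p := by
          intro I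
          rw [← lintegral_finsetSum]
          · congr 1; ext r
            rw [net_sum _ hy.lt, hy.per, per_lint]
            intro q; simp only [mp.2]
          · intro J _
            apply Measurable.lintegral_prod_right' (f := fun z : ℝ × ℝ => ‖G z.1 z.2‖ₑ ^ p)
            fun_prop
        simp only [e1]
        rw [net_sum _ hx.lt, hx.per, per_lint]
        swap
        · intro q; simp only [mp.1]
        have := L3 hp hf (hT0 n i) (hT0 m j) κ κ'
        refine (mul_le_mul_right this _).trans ?_
        unfold XX
        rw [ENNReal.mul_rpow_of_nonneg _ _ hp0, ENNReal.mul_rpow_of_nonneg _ _ hp0,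
          ENNReal.mul_rpow_of_nonneg _ _ hp0, ← ENNReal.rpow_mul, ← ENNReal.rpow_mul,
          one_div_mul_cancel (by linarith), ENNReal.rpow_one, ENNReal.rpow_one]
        apply le_of_eq
        simp only [Tn, mul_assoc]
    _ ≤ (∑ κ : Bool, ∑ i : Bool, ∑ κ' : Bool, ∑ j : Bool,
        (256 * XX p f (n + i.toNat) (m + j.toNat))) ^ p := by
        refine le_trans ?_ (sum_bool_rpow hp _)
        gcongr with κ
        refine le_trans ?_ (sum_bool_rpow hp _)
        gcongr with i
        refine le_trans ?_ (sum_bool_rpow hp _)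
        gcongr with κ'
        exact sum_bool_rpow hp _
    _ = Mb p f n m ^ p := by
        congr 1
        simp only [Mb, Fintype.sum_bool]
        ring


open MeasureTheory Filter Set
open scoped ENNReal

lemma lpNorm2_prod {p : ℝ} (hp : 1 < p) {f : ℝ → ℝ → ℝ} (hf : Measurable (Function.uncurry f)) :
    lpNorm2 p f = (∫⁻ z, ‖f z.1 z.2‖ₑ ^ p
      ∂((volume.restrict (Icc (0:ℝ) 1)).prod (volume.restrict (Icc (0:ℝ) 1)))) ^ (1 / p) := by
  unfold lpNorm2
  simp only [ofReal_abs_rpow (by linarith : (0:ℝ) ≤ p)]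
  rw [lintegral_prod]
  apply Measurable.aemeasurable
  exact hf.enorm.pow_const p

lemma lpNorm2_add {p : ℝ} (hp : 1 < p) {f g : ℝ → ℝ → ℝ} (hf : Measurable (Function.uncurry f))
    (hg : Measurable (Function.uncurry g)) :
    lpNorm2 p (fun x y => f x y + g x y) ≤ lpNorm2 p f + lpNorm2 p g := by
  rw [lpNorm2_prod hp hf, lpNorm2_prod hp hg, lpNorm2_prod hp (f := fun x y => f x y + g x y) (hf.add hg)]
  refine le_trans ?_ (ENNReal.lintegral_Lp_add_le (p := p)
    (f := fun z : ℝ × ℝ => ‖f z.1 z.2‖ₑ) (g := fun z : ℝ × ℝ => ‖g z.1 z.2‖ₑ)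
    hf.enorm.aemeasurable hg.enorm.aemeasurable hp.le)
  apply ENNReal.rpow_le_rpow _ (by positivity)
  apply lintegral_mono
  intro z
  exact ENNReal.rpow_le_rpow (enorm_add_le _ _) (by linarith)

lemma lpNorm2_neg (p : ℝ) (f : ℝ → ℝ → ℝ) : lpNorm2 p (fun x y => - f x y) = lpNorm2 p f := by
  simp [lpNorm2]

lemma per_shift {F : ℝ → ℝ≥0∞} (hF : Function.Periodic F 1) (a : ℝ) :
    ∫⁻ x in Icc (0:ℝ) 1, F (x + a) = ∫⁻ x in Icc (0:ℝ) 1, F x := by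
  rw [← per_lint hF a, ← restrict_Ioc_eq_restrict_Icc]
  have h := (measurePreserving_add_right (volume : Measure ℝ) a).setLIntegral_comp_preimage_emb
    (MeasurableEquiv.addRight a).measurableEmbedding F (Ioc a (a + 1))
  rw [← h]
  congr 2
  ext x
  simp only [mem_Ioc, mem_preimage]
  constructor <;> rintro ⟨h1, h2⟩ <;> constructor <;> linarith

lemma lpNorm2_shift (p : ℝ) {f : ℝ → ℝ → ℝ} (hf : BiPeriodic f) (a b : ℝ) :
    lpNorm2 p (fun x y => f (x + a) (y + b)) = lpNorm2 p f := by
  unfold lpNorm2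
  congr 1
  rw [per_shift (F := fun x => ∫⁻ y in Icc (0:ℝ) 1, ENNReal.ofReal (|f x (y + b)| ^ p))]
  · congr 1; ext x
    apply per_shift (F := fun y => ENNReal.ofReal (|f x y| ^ p))
    intro y; simp only [hf.2]
  · intro x; simp only [hf.1]

lemma lpNorm2_swap {p : ℝ} (hp : 1 < p) {f : ℝ → ℝ → ℝ} (hf : Measurable (Function.uncurry f)) :
    lpNorm2 p (fun y x => f x y) = lpNorm2 p f := by
  unfold lpNorm2
  simp only [ofReal_abs_rpow (by linarith : (0:ℝ) ≤ p)]
  rw [lintegral_lintegral_swap]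
  apply Measurable.aemeasurable
  exact (hf.comp measurable_swap).enorm.pow_const p

lemma Dl_meas2 {f : ℝ → ℝ → ℝ} (hf : Measurable (Function.uncurry f)) (s t : ℝ) :
    Measurable (Function.uncurry (Dl f s t)) :=
  (Dl_meas hf).comp (f := fun w : ℝ × ℝ => (w, (t, s))) (by fun_prop)

lemma Dl_per {f : ℝ → ℝ → ℝ} (hf : BiPeriodic f) (s t : ℝ) : BiPeriodic (Dl f s t) := by
  have h1 : ∀ x s y, f (x + 1 + s) y = f (x + s) y := by
    intro x s y; rw [← hf.1 (x + s) y]; congr 1; ring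
  have h2 : ∀ x y s, f x (y + 1 + s) = f x (y + s) := by
    intro x y s; rw [← hf.2 x (y + s)]; congr 1; ring
  constructor
  · intro x y; simp only [Dl, h1, hf.1]
  · intro x y; simp only [Dl, h2, hf.2]

lemma mixed_def (p : ℝ) (f : ℝ → ℝ → ℝ) (u v : ℝ) : mixedModulus p f u v =
    ⨆ (s : ℝ) (_ : s ∈ Set.Icc 0 u) (t : ℝ) (_ : t ∈ Set.Icc 0 v), lpNorm2 p (Dl f s t) := rfl

lemma mixed_mono (p : ℝ) (f : ℝ → ℝ → ℝ) {u u' v v' : ℝ} (h : u ≤ u') (h' : v ≤ v') :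
    mixedModulus p f u v ≤ mixedModulus p f u' v' := by
  rw [mixed_def]
  simp only [iSup_le_iff]
  intro s hs t ht
  exact le_mixed p f ⟨hs.1, hs.2.trans h⟩ ⟨ht.1, ht.2.trans h'⟩

lemma mixed_swap {p : ℝ} (hp : 1 < p) {f : ℝ → ℝ → ℝ} (hf : Measurable (Function.uncurry f)) (u v : ℝ) :
    mixedModulus p (fun y x => f x y) v u = mixedModulus p f u v := by
  have key : ∀ s t, lpNorm2 p (Dl (fun y x => f x y) t s) = lpNorm2 p (Dl f s t) := by
    intro s t
    rw [← lpNorm2_swap hp (Dl_meas2 hf s t)]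
    congr 1; ext x y; simp only [Dl]; ring
  apply le_antisymm
  · rw [mixed_def]
    simp only [iSup_le_iff]
    intro s hs t ht
    rw [key]
    exact le_mixed p f ht hs
  · rw [mixed_def p f]
    simp only [iSup_le_iff]
    intro s hs t ht
    rw [← key]
    exact le_mixed p _ ht hs

lemma Dl_nsmul {p : ℝ} (hp : 1 < p) {f : ℝ → ℝ → ℝ} (hf : Measurable (Function.uncurry f))
    (hper : BiPeriodic f) (r t : ℝ) (k : ℕ) :
    lpNorm2 p (Dl f (k * r) t) ≤ k * lpNorm2 p (Dl f r t) := by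
  induction k with
  | zero =>
    have : Dl f (((0:ℕ):ℝ) * r) t = fun x y => 0 := by
      ext x y; simp [Dl]
    rw [this]
    simp only [lpNorm2]
    rw [abs_zero, Real.zero_rpow (by linarith)]
    simp; linarith
  | succ k ih =>
    have : Dl f (((k + 1 : ℕ):ℝ) * r) t = fun x y => Dl f (k * r) t x y + Dl f r t (x + k * r) (y + 0) := by
      ext x y; simp only [Dl]; push_cast
      rw [show x + (k + 1) * r = x + k * r + r by ring, add_zero]
      ring
    rw [this]
    have hm := (Dl_meas2 hf r t).comp (f := fun z : ℝ × ℝ => (z.1 + k * r, z.2 + 0)) (by fun_prop)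
    refine (lpNorm2_add hp (Dl_meas2 hf _ t) (g := fun x y => Dl f r t (x + k * r) (y + 0)) hm).trans ?_
    rw [lpNorm2_shift p (Dl_per hper r t)]
    push_cast
    rw [add_mul, one_mul]
    gcongr

lemma mixed_dbl {p : ℝ} (hp : 1 < p) {f : ℝ → ℝ → ℝ} (hf : Measurable (Function.uncurry f))
    (hper : BiPeriodic f) {u t : ℝ} (hu : 0 < u) (hut : u ≤ t) (v : ℝ) :
    mixedModulus p f t v ≤ ENNReal.ofReal (2 * t / u) * mixedModulus p f u v := by
  rw [mixed_def]
  simp only [iSup_le_iff]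
  intro s hs r hr
  set k := ⌈t / u⌉₊ with hk
  have h1 : 1 ≤ t / u := (one_le_div hu).2 hut
  have hk0 : (0:ℝ) < k := by
    have := Nat.le_ceil (t / u)
    linarith
  have hkt : t ≤ k * u := by
    have := Nat.le_ceil (t / u)
    exact (div_le_iff₀ hu).1 this
  have hk2 : (k:ℝ) ≤ 2 * t / u := by
    have := (Nat.ceil_lt_add_one (by linarith : 0 ≤ t / u)).le
    rw [mul_div_assoc]
    linarith
  have e : s = k * (s / k) := by field_simp
  rw [e]
  refine (Dl_nsmul hp hf hper (s / k) r k).trans ?_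
  gcongr
  · rw [← ENNReal.ofReal_natCast]; exact ENNReal.ofReal_le_ofReal hk2
  · apply le_mixed p f ⟨?_, ?_⟩ hr
    · have := hs.1; positivity
    · rw [div_le_iff₀ hk0]; linarith [hs.2]

lemma mixed_dbl2 {p : ℝ} (hp : 1 < p) {f : ℝ → ℝ → ℝ} (hf : Measurable (Function.uncurry f))
    (hper : BiPeriodic f) {u t : ℝ} (hu : 0 < u) (hut : u ≤ t) (v : ℝ) :
    mixedModulus p f v t ≤ ENNReal.ofReal (2 * t / u) * mixedModulus p f v u := by
  rw [← mixed_swap hp hf v t, ← mixed_swap hp hf v u]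
  exact mixed_dbl hp (f := fun y x => f x y) (hf.comp measurable_swap) ⟨fun x y => hper.2 y x, fun x y => hper.1 y x⟩ hu hut v

lemma mixed_lt_top {p : ℝ} (hp : 1 < p) {f : ℝ → ℝ → ℝ} (hf : MemLp2 p f) (u v : ℝ) :
    mixedModulus p f u v < ⊤ := by
  obtain ⟨hm, hper, hfin⟩ := hf
  have : mixedModulus p f u v ≤ 4 * lpNorm2 p f := by
    rw [mixed_def]
    simp only [iSup_le_iff]
    intro s hs t ht
    have m1 : ∀ a b : ℝ, Measurable (Function.uncurry (fun x y => f (x + a) (y + b))) := fun a b =>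
      hm.comp (f := fun z : ℝ × ℝ => (z.1 + a, z.2 + b)) (by fun_prop)
    have e : Dl f s t = fun x y => ((f (x + s) (y + t) + - f (x + s) (y + 0)) + - f (x + 0) (y + t))
        + f (x + 0) (y + 0) := by
      ext x y; simp only [Dl, add_zero]; ring
    rw [e]
    have n1 := lpNorm2_shift p hper s t
    have n2 := lpNorm2_shift p hper s 0
    have n3 := lpNorm2_shift p hper 0 t
    have n4 := lpNorm2_shift p hper 0 0
    have n2' := lpNorm2_neg p (fun x y => f (x + s) (y + 0))
    have n3' := lpNorm2_neg p (fun x y => f (x + 0) (y + t))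
    have a1 := lpNorm2_add hp (m1 s t) (g := fun x y => - f (x + s) (y + 0)) (m1 s 0).neg
    have a2 := lpNorm2_add hp (f := fun x y => f (x + s) (y + t) + - f (x + s) (y + 0))
      (g := fun x y => - f (x + 0) (y + t)) ((m1 s t).add (m1 s 0).neg) (m1 0 t).neg
    have a3 := lpNorm2_add hp
      (f := fun x y => (f (x + s) (y + t) + - f (x + s) (y + 0)) + - f (x + 0) (y + t))
      (((m1 s t).add (m1 s 0).neg).add (m1 0 t).neg) (m1 0 0)
    refine a3.trans ?_
    refine (add_le_add_left (a2.trans (add_le_add_left a1 _)) _).trans ?_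
    rw [n4]
    change lpNorm2 p _ + lpNorm2 p (fun x y => - f (x + s) (y + 0))
      + lpNorm2 p (fun x y => - f (x + 0) (y + t)) + _ ≤ _
    rw [n2', n3', n1, n2, n3]
    apply le_of_eq; ring
  exact this.trans_lt (ENNReal.mul_lt_top (by simp) hfin)


open MeasureTheory Filter Set
open scoped ENNReal

noncomputable def Wt (p u : ℝ) : ℝ≥0∞ := ENNReal.ofReal (u ^ (-(1/p)) / u)

lemma Wt_meas (p : ℝ) : Measurable (Wt p) := by unfold Wt; fun_prop

structure Dbl (Ω : ℝ → ℝ≥0∞) : Prop where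
  mono : ∀ u t, 0 < u → u ≤ t → Ω u ≤ Ω t
  dbl : ∀ u t, 0 < u → u ≤ t → Ω t ≤ ENNReal.ofReal (2 * t / u) * Ω u

lemma lint_rpow {r a b : ℝ} (ha : 0 < a) (hab : a ≤ b) (hr : r ≠ -1) :
    ∫⁻ u in Ioc a b, ENNReal.ofReal (u ^ r) = ENNReal.ofReal ((b ^ (r + 1) - a ^ (r + 1)) / (r + 1)) := by
  have h0 : (0:ℝ) ∉ uIcc a b := by
    rw [uIcc_of_le hab]; intro h; linarith [h.1]
  rw [← ofReal_integral_eq_lintegral_ofReal, ← intervalIntegral.integral_of_le hab,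
    integral_rpow (Or.inr ⟨hr, h0⟩)]
  · have := intervalIntegral.intervalIntegrable_rpow (μ := volume) (r := r) (Or.inr h0)
    rwa [intervalIntegrable_iff_integrableOn_Ioc_of_le hab] at this
  · filter_upwards [ae_restrict_mem measurableSet_Ioc] with u hu
    have : 0 < u := ha.trans hu.1
    positivity

lemma tile1 {p : ℝ} (hp : 1 < p) {Ω : ℝ → ℝ≥0∞} (hΩ : Dbl Ω) {t : ℝ} (ht : 0 < t) :
    ENNReal.ofReal t⁻¹ ^ (1/p) * Ω t ≤ ENNReal.ofReal (4 * (1 / (p * (p / (p - 1))))) *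
      ∫⁻ u in Ioc (t * 2 ^ (-(p / (p - 1)))) (t * 2 ^ p), Wt p u * Ω u := by
  have hp0 : 0 < p := by linarith
  have hp1 : 0 < p - 1 := by linarith
  set q := p / (p - 1) with hq
  have hq0 : 0 < q := by positivity
  have hpq : p * q = p + q := by rw [hq]; field_simp; ring
  have e1 : t * 2 ^ (-q) ≤ t := by
    apply mul_le_of_le_one_right ht.le
    exact Real.rpow_le_one_of_one_le_of_nonpos (by norm_num) (by linarith)
  have e2 : t ≤ t * 2 ^ p := by
    apply le_mul_of_one_le_right ht.le
    exact Real.one_le_rpow (by norm_num) (by linarith)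
  have pos1 : 0 < t * 2 ^ (-q) := by positivity
  rw [← Ioc_union_Ioc_eq_Ioc e1 e2, lintegral_union measurableSet_Ioc (Ioc_disjoint_Ioc_of_le le_rfl)]
  have r2 : (2:ℝ) ^ p > 0 := by positivity
  have A1 : ENNReal.ofReal (p / 2 * t ^ (-(1/p))) * Ω t ≤ ∫⁻ u in Ioc t (t * 2 ^ p), Wt p u * Ω u := by
    calc _ = ∫⁻ u in Ioc t (t * 2 ^ p), ENNReal.ofReal (u ^ (-(1/p) - 1)) * Ω t := by
          rw [lintegral_mul_const _ (by fun_prop), lint_rpow ht e2 (by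
            intro h; have : 0 < 1 / p := by positivity
            linarith)]
          congr 2
          rw [show -(1 / p) - 1 + 1 = -(1/p) by ring, Real.mul_rpow ht.le (by positivity),
            ← Real.rpow_mul (by norm_num), show p * -(1/p) = -1 by field_simp, Real.rpow_neg_one]
          field_simp; ring
      _ ≤ _ := by
          apply setLIntegral_mono' measurableSet_Ioc
          intro u hu
          have hu0 : 0 < u := ht.trans hu.1
          apply mul_le_mul' _ (hΩ.mono _ _ ht hu.1.le)
          rw [Wt, Real.rpow_sub_one hu0.ne']
  have A2 : ENNReal.ofReal (q / 4 * t ^ (-(1/p))) * Ω t ≤ ∫⁻ u in Ioc (t * 2 ^ (-q)) t, Wt p u * Ω u := by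
    have hq1 : -(1 / p) + 1 = 1 / q := by rw [hq]; field_simp; ring
    calc _ = ∫⁻ u in Ioc (t * 2 ^ (-q)) t, ENNReal.ofReal (u ^ (-(1/p))) *
          (ENNReal.ofReal (1 / (2 * t)) * Ω t) := by
          have : -(1/p) ≠ -1 := by
            intro h
            have : 0 < 1 / q := by positivity
            linarith
          rw [lintegral_mul_const _ (by fun_prop), lint_rpow pos1 e1 this, ← mul_assoc]
          congr 1
          rw [← ENNReal.ofReal_mul' (by positivity)]
          congr 1
          rw [hq1, Real.mul_rpow ht.le (by positivity),
            ← Real.rpow_mul (by norm_num), show -q * (1/q) = -1 by field_simp, Real.rpow_neg_one]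
          rw [show t ^ (1/q) = t ^ (-(1/p)) * t by rw [← hq1, Real.rpow_add_one ht.ne']]
          field_simp; ring
      _ ≤ _ := by
          apply setLIntegral_mono' measurableSet_Ioc
          intro u hu
          have hu0 : 0 < u := pos1.trans hu.1
          have := hΩ.dbl _ _ hu0 hu.2
          calc _ ≤ ENNReal.ofReal (u ^ (-(1/p))) * (ENNReal.ofReal (1 / (2 * t)) *
                (ENNReal.ofReal (2 * t / u) * Ω u)) := by gcongr
            _ = _ := by
              rw [← mul_assoc, ← mul_assoc, ← ENNReal.ofReal_mul (by positivity),
                ← ENNReal.ofReal_mul (by positivity), Wt]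
              congr 2
              field_simp
  calc _ = ENNReal.ofReal (4 * (1 / (p * q))) *
        (ENNReal.ofReal (q / 4 * t ^ (-(1/p))) * Ω t + ENNReal.ofReal (p / 4 * t ^ (-(1/p))) * Ω t) := by
        rw [← add_mul, ← ENNReal.ofReal_add (by positivity) (by positivity), ← mul_assoc,
          ← ENNReal.ofReal_mul (by positivity), ENNReal.ofReal_rpow_of_pos (by positivity)]
        congr 2
        rw [Real.inv_rpow ht.le, ← Real.rpow_neg ht.le, hpq]
        field_simp; ring
    _ ≤ _ := by
        gcongr
        refine le_trans ?_ A1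
        gcongr
        norm_num

noncomputable def sig (p : ℝ) (n : ℕ) : ℝ := 2 ^ (p - p * (p / (p - 1)) * n)

lemma tiles {p : ℝ} (hp : 1 < p) {Ω : ℝ → ℝ≥0∞} (hΩ : Dbl Ω) :
    ∑' n, ENNReal.ofReal (tau p (n + 1))⁻¹ ^ (1/p) * Ω (tau p (n + 1)) ≤
      ENNReal.ofReal (4 * (1 / (p * (p / (p - 1))))) * ∫⁻ u in Ioc (0:ℝ) 1, Wt p u * Ω u := by
  have hp0 : 0 < p := by linarith
  have hp1 : 0 < p - 1 := by linarith
  have hpq : p * (p / (p - 1)) = p + p / (p - 1) := by field_simp; ring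
  have hq0 : 0 < p / (p - 1) := by positivity
  have s1 : ∀ n, tau p n * 2 ^ p = sig p n := by
    intro n; unfold tau sig; rw [← Real.rpow_add (by norm_num)]; congr 1; ring
  have s2 : ∀ n, tau p n * 2 ^ (-(p / (p - 1))) = sig p (n + 1) := by
    intro n; unfold tau sig; rw [← Real.rpow_add (by norm_num)]; congr 1
    push_cast
    linarith
  have anti : Antitone (sig p) := by
    intro n m h
    unfold sig
    apply Real.rpow_le_rpow_of_exponent_le (by norm_num)
    have : (n:ℝ) ≤ m := by exact_mod_cast h
    have : p * (p / (p - 1)) * n ≤ p * (p / (p - 1)) * m := by gcongr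
    linarith
  have anti' : Antitone (fun n => sig p (n + 1)) := fun n m h => anti (by omega)
  calc _ ≤ ∑' n, ENNReal.ofReal (4 * (1 / (p * (p / (p - 1))))) *
        ∫⁻ u in Ioc (sig p (n + 1 + 1)) (sig p (n + 1)), Wt p u * Ω u := by
        apply ENNReal.tsum_le_tsum
        intro n
        have := tile1 hp hΩ (tau_pos p (n + 1))
        rwa [s1, s2] at this
    _ = ENNReal.ofReal (4 * (1 / (p * (p / (p - 1))))) *
        ∫⁻ u in ⋃ n, Ioc (sig p (n + 1 + 1)) (sig p (n + 1)), Wt p u * Ω u := by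
        rw [ENNReal.tsum_mul_left, lintegral_iUnion (fun n => measurableSet_Ioc)]
        exact anti'.pairwise_disjoint_on_Ioc_succ
    _ ≤ _ := by
        gcongr
        apply iUnion_subset
        intro n u hu
        refine ⟨lt_trans (by unfold sig; positivity) hu.1, hu.2.trans ?_⟩
        unfold sig
        apply Real.rpow_le_one_of_one_le_of_nonpos (by norm_num)
        push_cast
        have : 0 ≤ p * (p / (p - 1)) * n := by positivity
        linarith

lemma Dbl_one {p : ℝ} (hp : 1 < p) {Ω : ℝ → ℝ≥0∞} (hΩ : Dbl Ω) :
    Ω 1 ≤ 2 * ∫⁻ u in Ioc (0:ℝ) 1, Wt p u * Ω u := by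
  have : ∫⁻ u in Ioc (0:ℝ) 1, ENNReal.ofReal (1/2) * Ω 1 ≤ ∫⁻ u in Ioc (0:ℝ) 1, Wt p u * Ω u := by
    apply setLIntegral_mono' measurableSet_Ioc
    intro u hu
    have hu0 : 0 < u := hu.1
    calc _ ≤ ENNReal.ofReal (1/2) * (ENNReal.ofReal (2 * 1 / u) * Ω u) := by
          gcongr; exact hΩ.dbl _ _ hu0 hu.2
      _ = ENNReal.ofReal (1 / u) * Ω u := by
          rw [← mul_assoc, ← ENNReal.ofReal_mul (by norm_num)]
          congr 2; ring
      _ ≤ _ := by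
          unfold Wt
          gcongr
          apply Real.one_le_rpow_of_pos_of_le_one_of_nonpos hu0 hu.2
          have : 0 < 1 / p := by positivity
          linarith
  simp only [lintegral_const, Measure.restrict_apply_univ, Real.volume_Ioc, sub_zero,
    ENNReal.ofReal_one, mul_one] at this
  calc Ω 1 = 2 * (ENNReal.ofReal (1/2) * Ω 1) := by
        rw [← mul_assoc, show (2:ℝ≥0∞) = ENNReal.ofReal 2 by simp, ← ENNReal.ofReal_mul (by norm_num)]
        norm_num
    _ ≤ _ := by gcongr

section
variable {p : ℝ} (hp : 1 < p) {f : ℝ → ℝ → ℝ} (hf : Measurable (Function.uncurry f))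
    (hper : BiPeriodic f)
include hp hf hper

lemma Dbl_u (v : ℝ) : Dbl (fun u => mixedModulus p f u v) where
  mono := fun _ _ _ h => mixed_mono p f h le_rfl
  dbl := fun _ _ hu h => mixed_dbl hp hf hper hu h v

lemma Dbl_v (u : ℝ) : Dbl (fun v => mixedModulus p f u v) where
  mono := fun _ _ _ h => mixed_mono p f le_rfl h
  dbl := fun _ _ hu h => mixed_dbl2 hp hf hper hu h u

lemma Dbl_2 : Dbl (fun u => ∫⁻ v in Ioc (0:ℝ) 1, Wt p v * mixedModulus p f u v) where
  mono := fun u t hu h => by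
    gcongr with v; exact mixed_mono p f h le_rfl
  dbl := fun u t hu h => by
    rw [← lintegral_const_mul' _ _ (by simp)]
    apply lintegral_mono
    intro v
    beta_reduce
    rw [mul_left_comm]
    gcongr
    exact mixed_dbl hp hf hper hu h v

omit hp hf hper in
lemma Ip_eq : Ip p f = ∫⁻ u in Ioc (0:ℝ) 1, Wt p u * ∫⁻ v in Ioc (0:ℝ) 1, Wt p v * mixedModulus p f u v := by
  unfold Ip
  apply setLIntegral_congr_fun measurableSet_Ioc
  intro u hu
  beta_reduce
  rw [← lintegral_const_mul' _ _ (by simp [Wt])]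
  apply setLIntegral_congr_fun measurableSet_Ioc
  intro v hv
  have h1 := hu.1
  have h2 := hv.1
  simp only [Wt]
  rw [← mul_assoc, ← ENNReal.ofReal_mul (by positivity), Real.mul_rpow h1.le h2.le]
  congr 2
  field_simp

omit hp hf hper in
lemma Kp_eq : Kp p f = (∫⁻ u in Ioc (0:ℝ) 1, Wt p u * mixedModulus p f u 1)
    + ∫⁻ u in Ioc (0:ℝ) 1, Wt p u * mixedModulus p f 1 u := by
  unfold Kp
  rw [← lintegral_add_left]
  · simp only [Wt, mul_add]
  · apply (Wt_meas p).mul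
    apply Monotone.measurable
    intro a b h
    exact mixed_mono p f h le_rfl

lemma Kp_le : Kp p f ≤ 4 * Ip p f := by
  rw [Kp_eq, Ip_eq]
  have h2 := Dbl_one hp (Dbl_2 hp hf hper)
  have h1 : ∫⁻ u in Ioc (0:ℝ) 1, Wt p u * mixedModulus p f u 1 ≤
      2 * ∫⁻ u in Ioc (0:ℝ) 1, Wt p u * ∫⁻ v in Ioc (0:ℝ) 1, Wt p v * mixedModulus p f u v := by
    rw [← lintegral_const_mul' _ _ (by simp)]
    apply lintegral_mono
    intro u
    beta_reduce
    rw [mul_left_comm]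
    gcongr
    exact Dbl_one hp (Dbl_v hp hf hper u)
  refine (add_le_add h1 h2).trans ?_
  rw [← add_mul]; norm_num

lemma sumX : ∑' n, ∑' m, XX p f n m ≤ mixedModulus p f 1 1
    + ENNReal.ofReal (4 * (1 / (p * (p / (p - 1))))) * Kp p f
    + ENNReal.ofReal (4 * (1 / (p * (p / (p - 1))))) ^ 2 * Ip p f := by
  set C := ENNReal.ofReal (4 * (1 / (p * (p / (p - 1))))) with hC
  set a : ℕ → ℝ≥0∞ := fun n => ENNReal.ofReal (tau p n)⁻¹ ^ (1/p) with ha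
  have a0 : a 0 = 1 := by simp [ha, tau_zero]
  have hX : ∀ n m, XX p f n m = a n * (a m * mixedModulus p f (tau p n) (tau p m)) := by
    intro n m; simp only [XX, ha]; ring
  have b1 : ∑' m, XX p f 0 (m + 1) ≤ C * ∫⁻ u in Ioc (0:ℝ) 1, Wt p u * mixedModulus p f 1 u := by
    simp only [hX, a0, one_mul, tau_zero]
    exact tiles hp (Dbl_v hp hf hper 1)
  have b2 : ∑' n, XX p f (n + 1) 0 ≤ C * ∫⁻ u in Ioc (0:ℝ) 1, Wt p u * mixedModulus p f u 1 := by
    simp only [hX, a0, one_mul, tau_zero]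
    exact tiles hp (Dbl_u hp hf hper 1)
  have b3 : ∑' n, ∑' m, XX p f (n + 1) (m + 1) ≤ C ^ 2 * Ip p f := by
    rw [Ip_eq, pow_two, mul_assoc]
    calc _ ≤ ∑' n, C * (a (n + 1) *
          ∫⁻ v in Ioc (0:ℝ) 1, Wt p v * mixedModulus p f (tau p (n + 1)) v) := by
          apply ENNReal.tsum_le_tsum
          intro n
          simp only [hX]
          rw [ENNReal.tsum_mul_left, mul_left_comm]
          gcongr
          exact tiles hp (Dbl_v hp hf hper _)
      _ ≤ _ := by
          rw [ENNReal.tsum_mul_left]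
          gcongr
          exact tiles hp (Dbl_2 hp hf hper)
  have s : ∀ g : ℕ → ℝ≥0∞, ∑' n, g n = g 0 + ∑' n, g (n + 1) := fun g =>
    tsum_eq_zero_add' ENNReal.summable
  rw [s (fun n => ∑' m, XX p f n m), s (fun m => XX p f 0 m)]
  have : ∑' n, ∑' m, XX p f (n + 1) m = ∑' n, XX p f (n + 1) 0 + ∑' n, ∑' m, XX p f (n + 1) (m + 1) := by
    rw [← ENNReal.tsum_add]
    congr 1; ext n
    rw [s (fun m => XX p f (n + 1) m)]
  rw [this, Kp_eq, mul_add]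
  have h00 : XX p f 0 0 = mixedModulus p f 1 1 := by
    rw [hX, a0, tau_zero]; simp
  rw [h00]
  calc _ ≤ mixedModulus p f 1 1 + C * (∫⁻ u in Ioc (0:ℝ) 1, Wt p u * mixedModulus p f 1 u)
      + (C * (∫⁻ u in Ioc (0:ℝ) 1, Wt p u * mixedModulus p f u 1) + C ^ 2 * Ip p f) := by gcongr
    _ = _ := by ring

lemma sumM : ∑' z : ℕ × ℕ, Mb p f z.1 z.2 ≤ ENNReal.ofReal 65536 * (mixedModulus p f 1 1
    + ENNReal.ofReal (1 / (p * (p / (p - 1)))) * Kp p f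
    + ENNReal.ofReal ((1 / (p * (p / (p - 1)))) ^ 2) * Ip p f) := by
  have hp1 : 0 < p - 1 := by linarith
  have hB : 0 ≤ 1 / (p * (p / (p - 1))) := by positivity
  have hs : ∀ i j : Bool, ∑' n, ∑' m, XX p f (n + i.toNat) (m + j.toNat) ≤ ∑' n, ∑' m, XX p f n m := by
    intro i j
    have h1 : ∀ n, ∑' m, XX p f n (m + j.toNat) ≤ ∑' m, XX p f n m := fun n =>
      ENNReal.tsum_comp_le_tsum_of_injective (add_left_injective j.toNat) (XX p f n)
    calc _ ≤ ∑' n, ∑' m, XX p f (n + i.toNat) m := ENNReal.tsum_le_tsum fun n => h1 _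
      _ ≤ _ := ENNReal.tsum_comp_le_tsum_of_injective (add_left_injective i.toNat)
        (fun n => ∑' m, XX p f n m)
  have e : ∑' z : ℕ × ℕ, Mb p f z.1 z.2 ≤ 4096 * ∑' n, ∑' m, XX p f n m := by
    rw [ENNReal.tsum_prod]
    simp only [Mb, ENNReal.tsum_mul_left, Fintype.sum_bool, ENNReal.tsum_add]
    have h1 := hs true true
    have h2 := hs true false
    have h3 := hs false true
    have h4 := hs false false
    calc _ ≤ 1024 * (∑' n, ∑' m, XX p f n m + ∑' n, ∑' m, XX p f n m
          + (∑' n, ∑' m, XX p f n m + ∑' n, ∑' m, XX p f n m)) := by gcongr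
      _ = _ := by ring
  refine e.trans ((mul_le_mul_right (sumX hp hf hper) _).trans ?_)
  have c1 : ENNReal.ofReal (4 * (1 / (p * (p / (p - 1))))) = 4 * ENNReal.ofReal (1 / (p * (p / (p - 1)))) := by
    rw [ENNReal.ofReal_mul (by norm_num)]; simp
  have c2 : ENNReal.ofReal ((1 / (p * (p / (p - 1)))) ^ 2) = ENNReal.ofReal (1 / (p * (p / (p - 1)))) ^ 2 := by
    rw [ENNReal.ofReal_pow hB]
  rw [c1, c2]
  have c3 : ENNReal.ofReal 65536 = 65536 := by simp
  rw [c3]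
  set B := ENNReal.ofReal (1 / (p * (p / (p - 1))))
  calc _ = 4096 * mixedModulus p f 1 1 + 16384 * (B * Kp p f) + 65536 * (B ^ 2 * Ip p f) := by ring
    _ ≤ 65536 * mixedModulus p f 1 1 + 65536 * (B * Kp p f) + 65536 * (B ^ 2 * Ip p f) := by
      gcongr <;> norm_num
    _ = _ := by ring

end

open MeasureTheory Filter Set
open scoped ENNReal

lemma per_loc {g : ℝ → ℝ} (hg : Measurable g) (hper : Function.Periodic g 1)
    (hfin : ∫⁻ x in Icc (0:ℝ) 1, ‖g x‖ₑ < ⊤) : LocallyIntegrable g := by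
  intro x
  refine ⟨Ioc (x - 1/2) (x - 1/2 + 1), Ioc_mem_nhds (by linarith) (by linarith), ?_⟩
  refine ⟨hg.aestronglyMeasurable, ?_⟩
  rw [HasFiniteIntegral, per_lint (F := fun x => ‖g x‖ₑ) (fun x => by simp only [hper x])]
  exact hfin

lemma per_ae_lt {φ : ℝ → ℝ≥0∞} (hφ : Measurable φ) (hper : Function.Periodic φ 1)
    (hfin : ∫⁻ x in Icc (0:ℝ) 1, φ x < ⊤) : ∀ᵐ x, φ x < ⊤ := by
  have h : ∀ n : ℤ, ∀ᵐ x ∂(volume.restrict (Ioc (n:ℝ) (n + 1))), φ x < ⊤ := by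
    intro n
    apply ae_lt_top hφ
    rw [per_lint hper]
    exact hfin.ne
  have := (ae_restrict_iUnion_iff (fun n : ℤ => Ioc (n:ℝ) (n + 1)) (fun x => φ x < ⊤)).2 h
  rwa [iUnion_Ioc_intCast, Measure.restrict_univ] at this

lemma lpNorm2_congr (p : ℝ) {f g : ℝ → ℝ → ℝ} (h : ∀ᵐ x, ∀ᵐ y, f x y = g x y) :
    lpNorm2 p f = lpNorm2 p g := by
  unfold lpNorm2
  congr 1
  apply lintegral_congr_ae
  filter_upwards [ae_restrict_of_ae h] with x hx
  apply lintegral_congr_ae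
  filter_upwards [ae_restrict_of_ae hx] with y hy
  rw [hy]

lemma ae_shift {P : ℝ → Prop} (h : ∀ᵐ x, P x) (s : ℝ) : ∀ᵐ x, P (x + s) :=
  (measurePreserving_add_right (volume : Measure ℝ) s).quasiMeasurePreserving.ae h

lemma modif {p : ℝ} (hp : 1 < p) {f : ℝ → ℝ → ℝ} (hf : MemLp2 p f) :
    ∃ F : ℝ → ℝ → ℝ, Good F ∧ BiPeriodic F ∧ mixedModulus p F = mixedModulus p f ∧
      (∀ᵐ z : ℝ × ℝ, f z.1 z.2 = F z.1 z.2) ∧ (∀ᵐ x, ∀ᵐ y, f x y = F x y) ∧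
      (∀ᵐ y, ∀ᵐ x, f x y = F x y) := by
  obtain ⟨hm, hper, hfin⟩ := hf
  have hm1 : Measurable (fun z : ℝ × ℝ => ‖f z.1 z.2‖ₑ) := hm.enorm
  have hm2 : Measurable (fun z : ℝ × ℝ => ‖f z.2 z.1‖ₑ) := hm1.comp measurable_swap
  have L1fin : ∫⁻ x in Icc (0:ℝ) 1, ∫⁻ y in Icc (0:ℝ) 1, ‖f x y‖ₑ < ⊤ := by
    have : IsProbabilityMeasure (volume.restrict (Icc (0:ℝ) 1)) := ⟨by simp⟩
    have hj := jen_aux hp ((volume.restrict (Icc (0:ℝ) 1)).prod (volume.restrict (Icc (0:ℝ) 1)))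
      hm1.aemeasurable
    rw [lpNorm2_prod hp hm] at hfin
    rw [ENNReal.rpow_lt_top_iff_of_pos (by positivity)] at hfin
    have := hj.trans_lt hfin
    rw [ENNReal.rpow_lt_top_iff_of_pos (by positivity)] at this
    rwa [lintegral_prod _ hm1.aemeasurable] at this
  have L1fin' : ∫⁻ y in Icc (0:ℝ) 1, ∫⁻ x in Icc (0:ℝ) 1, ‖f x y‖ₑ < ⊤ := by
    rwa [lintegral_lintegral_swap hm2.aemeasurable]
  set φ : ℝ → ℝ≥0∞ := fun x => ∫⁻ y in Icc (0:ℝ) 1, ‖f x y‖ₑ with hφ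
  set ψ : ℝ → ℝ≥0∞ := fun y => ∫⁻ x in Icc (0:ℝ) 1, ‖f x y‖ₑ with hψ
  have φm : Measurable φ := hm1.lintegral_prod_right'
  have ψm : Measurable ψ := hm2.lintegral_prod_right'
  have φp : Function.Periodic φ 1 := fun x => by simp only [hφ, hper.1]
  have ψp : Function.Periodic ψ 1 := fun x => by simp only [hψ, hper.2]
  have φa := per_ae_lt φm φp L1fin
  have ψa := per_ae_lt ψm ψp L1fin'
  classical
  set F : ℝ → ℝ → ℝ := fun x y => if φ x < ⊤ ∧ ψ y < ⊤ then f x y else 0 with hF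
  have Fle : ∀ x y, ‖F x y‖ₑ ≤ ‖f x y‖ₑ := by
    intro x y; simp only [hF]; split_ifs <;> simp
  have Fm : Measurable (Function.uncurry F) := by
    apply Measurable.ite _ hm measurable_const
    have s1 : MeasurableSet {x | φ x < ⊤} := φm measurableSet_Iio
    have s2 : MeasurableSet {x | ψ x < ⊤} := ψm measurableSet_Iio
    exact s1.prod s2
  have Fp : BiPeriodic F := by
    constructor
    · intro x y; simp only [hF, hper.1, φp x]
    · intro x y; simp only [hF, hper.2, ψp y]
  have Feq : ∀ x y, φ x < ⊤ → ψ y < ⊤ → f x y = F x y := by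
    intro x y h1 h2; simp [hF, h1, h2]
  refine ⟨F, ⟨Fm, ?_, ?_, ?_⟩, Fp, ?_, ?_, ?_, ?_⟩
  · intro x
    apply per_loc (Fm.comp (f := fun y => (x, y)) (by fun_prop)) (fun y => Fp.2 x y)
    by_cases h : φ x < ⊤
    · exact (lintegral_mono (fun y => Fle x y)).trans_lt h
    · simp [hF, h]
  · intro y
    apply per_loc (Fm.comp (f := fun x => (x, y)) (by fun_prop)) (fun x => Fp.1 x y)
    by_cases h : ψ y < ⊤
    · exact (lintegral_mono (fun x => Fle x y)).trans_lt h
    · simp [hF, h]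
  · rintro ⟨x, y⟩
    refine ⟨Ioc (x - 1/2) (x - 1/2 + 1) ×ˢ Ioc (y - 1/2) (y - 1/2 + 1),
      prod_mem_nhds (Ioc_mem_nhds (by linarith) (by linarith)) (Ioc_mem_nhds (by linarith) (by linarith)), ?_⟩
    refine ⟨Fm.aestronglyMeasurable, ?_⟩
    rw [HasFiniteIntegral, Measure.volume_eq_prod, ← Measure.prod_restrict,
      lintegral_prod _ Fm.enorm.aemeasurable]
    refine lt_of_le_of_lt ?_ L1fin
    rw [← per_lint φp (x - 1/2)]
    apply lintegral_mono
    intro r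
    simp only [hφ]
    rw [← per_lint (F := fun q => ‖f r q‖ₑ) (fun q => by simp only [hper.2]) (y - 1/2)]
    apply lintegral_mono
    intro q
    exact Fle r q
  · ext u v
    rw [mixed_def, mixed_def]
    congr 1; ext s; congr 1; ext hs; congr 1; ext t; congr 1; ext ht
    apply lpNorm2_congr
    filter_upwards [φa, ae_shift φa s] with x h1 h2
    filter_upwards [ψa, ae_shift ψa t] with y h3 h4
    simp only [Dl]
    rw [Feq _ _ h1 h3, Feq _ _ h1 h4, Feq _ _ h2 h3, Feq _ _ h2 h4]
  · have h1 : ∀ᵐ z : ℝ × ℝ, φ z.1 < ⊤ := Measure.quasiMeasurePreserving_fst.ae φa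
    have h2 : ∀ᵐ z : ℝ × ℝ, ψ z.2 < ⊤ := Measure.quasiMeasurePreserving_snd.ae ψa
    filter_upwards [h1, h2] with z hz1 hz2 using Feq _ _ hz1 hz2
  · filter_upwards [φa] with x h1
    filter_upwards [ψa] with y h2 using Feq _ _ h1 h2
  · filter_upwards [ψa] with y h2
    filter_upwards [φa] with x h1 using Feq _ _ h1 h2


open MeasureTheory Filter Set
open scoped ENNReal

lemma Eav_eq {f : ℝ → ℝ → ℝ} (hf : Good f) {h k : ℝ} (hh : 0 < h) (hk : 0 < k) (x y : ℝ) :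
    Eav f h k x y = h⁻¹ * k⁻¹ * ∫ z in Ioc x (x + h) ×ˢ Ioc y (y + k), Function.uncurry f z := by
  have := hf.int_box x (x + h) y (y + k)
  rw [Measure.prod_restrict] at this
  rw [Measure.volume_eq_prod, setIntegral_prod _ this]
  simp only [Eav, integral_unif hk, integral_unif hh, intervalIntegral.integral_const_mul]
  rw [mul_assoc]
  congr 2
  rw [intervalIntegral.integral_comp_add_left (fun s => ∫ t in (0:ℝ)..k, f s (y + t)) x]
  simp only [intervalIntegral.integral_comp_add_left]
  have h1 : x ≤ x + h := by linarith
  have h2 : y ≤ y + k := by linarith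
  simp only [add_zero, intervalIntegral.integral_of_le h1, intervalIntegral.integral_of_le h2]
  rfl

lemma ev_Ioc {x0 h z : ℝ} (h1 : z ≠ x0) (h2 : z ≠ x0 + h) :
    ∀ᶠ x in nhds x0, (z ∈ Ioc x (x + h) ↔ z ∈ Ioc x0 (x0 + h)) := by
  have a : ∀ᶠ x in nhds x0, (x < z ↔ x0 < z) := by
    rcases lt_or_gt_of_ne h1 with h | h
    · filter_upwards [lt_mem_nhds h] with x hx
      constructor <;> intro <;> linarith
    · filter_upwards [gt_mem_nhds h] with x hx
      constructor <;> intro <;> linarith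
  have b : ∀ᶠ x in nhds x0, (z ≤ x + h ↔ z ≤ x0 + h) := by
    rcases lt_or_gt_of_ne h2 with h' | h'
    · filter_upwards [lt_mem_nhds (show z - h < x0 by linarith)] with x hx
      constructor <;> intro <;> linarith
    · filter_upwards [gt_mem_nhds (show x0 < z - h by linarith)] with x hx
      constructor <;> intro <;> linarith
  filter_upwards [a, b] with x ha hb
  simp only [mem_Ioc, ha, hb]

lemma Eav_cont {f : ℝ → ℝ → ℝ} (hf : Good f) {h k : ℝ} (hh : 0 < h) (hk : 0 < k) :
    Continuous (Function.uncurry (Eav f h k)) := by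
  have e : Function.uncurry (Eav f h k) = fun w : ℝ × ℝ => h⁻¹ * k⁻¹ *
      ∫ z, (Ioc w.1 (w.1 + h) ×ˢ Ioc w.2 (w.2 + k)).indicator (Function.uncurry f) z := by
    ext ⟨x, y⟩
    simp only [Function.uncurry_apply_pair]
    rw [Eav_eq hf hh hk, integral_indicator (measurableSet_Ioc.prod measurableSet_Ioc)]
  rw [e]
  apply continuous_const.mul
  rw [continuous_iff_continuousAt]
  rintro ⟨x, y⟩
  set B : Set (ℝ × ℝ) := Icc (x - 1) (x + h + 1) ×ˢ Icc (y - 1) (y + k + 1) with hB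
  have Bm : MeasurableSet B := measurableSet_Icc.prod measurableSet_Icc
  apply continuousAt_of_dominated (bound := B.indicator (fun z => ‖Function.uncurry f z‖))
  · apply Eventually.of_forall
    intro w
    exact (hf.meas.indicator (measurableSet_Ioc.prod measurableSet_Ioc)).aestronglyMeasurable
  · have h1 : ∀ᶠ w : ℝ × ℝ in nhds (x, y), w.1 ∈ Ioo (x - 1) (x + 1) :=
      continuous_fst.continuousAt.eventually (Ioo_mem_nhds (by simp) (by simp))
    have h2 : ∀ᶠ w : ℝ × ℝ in nhds (x, y), w.2 ∈ Ioo (y - 1) (y + 1) :=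
      continuous_snd.continuousAt.eventually (Ioo_mem_nhds (by simp) (by simp))
    filter_upwards [h1, h2] with w hw1 hw2
    apply Eventually.of_forall
    intro z
    rw [norm_indicator_eq_indicator_norm]
    apply indicator_le_indicator_of_subset
    · apply Set.prod_mono
      · intro r hr; exact ⟨by linarith [hr.1, hw1.1], by linarith [hr.2, hw1.2]⟩
      · intro r hr; exact ⟨by linarith [hr.1, hw2.1], by linarith [hr.2, hw2.2]⟩
    · intro z; exact norm_nonneg _
  · rw [integrable_indicator_iff Bm]
    exact (hf.joint.integrableOn_isCompact (isCompact_Icc.prod isCompact_Icc)).norm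
  · have ne : ∀ a : ℝ, ∀ᵐ r : ℝ, r ≠ a := fun a => by
      simp [ae_iff]
    have n1 : ∀ a : ℝ, ∀ᵐ z : ℝ × ℝ, z.1 ≠ a := fun a => Measure.quasiMeasurePreserving_fst.ae (ne a)
    have n2 : ∀ a : ℝ, ∀ᵐ z : ℝ × ℝ, z.2 ≠ a := fun a => Measure.quasiMeasurePreserving_snd.ae (ne a)
    filter_upwards [n1 x, n1 (x + h), n2 y, n2 (y + k)] with z a1 a2 a3 a4
    have b1 : ∀ᶠ w : ℝ × ℝ in nhds (x, y), (z.1 ∈ Ioc w.1 (w.1 + h) ↔ z.1 ∈ Ioc x (x + h)) :=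
      continuous_fst.continuousAt.eventually (ev_Ioc a1 a2)
    have b2 : ∀ᶠ w : ℝ × ℝ in nhds (x, y), (z.2 ∈ Ioc w.2 (w.2 + k) ↔ z.2 ∈ Ioc y (y + k)) :=
      continuous_snd.continuousAt.eventually (ev_Ioc a3 a4)
    apply ContinuousAt.congr (f := fun _ => (Ioc x (x + h) ×ˢ Ioc y (y + k)).indicator (Function.uncurry f) z)
      continuousAt_const
    filter_upwards [b1, b2] with w c1 c2
    classical
    simp only [indicator_apply, mem_prod, c1, c2]

lemma Eav_per {f : ℝ → ℝ → ℝ} (hf : BiPeriodic f) (h k : ℝ) : BiPeriodic (Eav f h k) := by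
  have h1 : ∀ x s y, f (x + 1 + s) y = f (x + s) y := by
    intro x s y; rw [← hf.1 (x + s) y]; congr 1; ring
  have h2 : ∀ x y s, f x (y + 1 + s) = f x (y + s) := by
    intro x y s; rw [← hf.2 x (y + s)]; congr 1; ring
  constructor
  · intro x y; simp only [Eav, h1]
  · intro x y; simp only [Eav, h2]

lemma tau_lim {p : ℝ} (hp : 1 < p) : Tendsto (tau p) atTop (nhds 0) := by
  have h1 : 0 < p - 1 := by linarith
  have e : tau p = fun n => ((2:ℝ) ^ (-(p * (p / (p - 1))))) ^ n := by
    ext n; unfold tau; rw [Real.rpow_mul (by norm_num), Real.rpow_natCast]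
  rw [e]
  apply tendsto_pow_atTop_nhds_zero_of_lt_one (by positivity)
  apply Real.rpow_lt_one_of_one_lt_of_neg (by norm_num)
  have : 0 < p * (p / (p - 1)) := by positivity
  linarith

lemma tau_half_lim {p : ℝ} (hp : 1 < p) : Tendsto (fun n => tau p n / 2) atTop (nhdsWithin 0 (Ioi 0)) := by
  apply tendsto_nhdsWithin_iff.2
  constructor
  · simpa using (tau_lim hp).div_const 2
  · exact Eventually.of_forall fun n => by have := tau_pos p n; simp only [mem_Ioi]; positivity

lemma leb2 {p : ℝ} (hp : 1 < p) {f : ℝ → ℝ → ℝ} (hf : Good f) : ∀ᵐ z : ℝ × ℝ,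
    Tendsto (fun n => Eav f (tau p n) (tau p n) z.1 z.2) atTop (nhds (f z.1 z.2)) := by
  filter_upwards [IsUnifLocDoublingMeasure.ae_tendsto_average volume hf.joint 1] with z hz
  have := hz (l := atTop) (fun n => (z.1 + tau p n / 2, z.2 + tau p n / 2)) (fun n => tau p n / 2)
    (tau_half_lim hp) (by
      apply Eventually.of_forall
      intro n
      have := tau_pos p n
      rw [← closedBall_prod_same, Real.closedBall_eq_Icc, Real.closedBall_eq_Icc, one_mul]
      refine ⟨⟨?_, ?_⟩, ⟨?_, ?_⟩⟩ <;> (try dsimp only) <;> linarith)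
  refine this.congr ?_
  intro n
  have ht := tau_pos p n
  rw [← closedBall_prod_same, Real.closedBall_eq_Icc, Real.closedBall_eq_Icc, setAverage_eq]
  rw [Eav_eq hf ht ht, Measure.volume_eq_prod, ← Measure.prod_restrict, ← Measure.prod_restrict,
    restrict_Ioc_eq_restrict_Icc, restrict_Ioc_eq_restrict_Icc]
  simp only [add_sub_cancel_right, add_assoc, add_halves]
  rw [measureReal_def, Measure.prod_prod]
  simp [ht.le, smul_eq_mul]

lemma leb1 {p : ℝ} (hp : 1 < p) {w : ℝ → ℝ} (hw : LocallyIntegrable w) : ∀ᵐ x : ℝ,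
    Tendsto (fun n => ∫ s, w (x + s) ∂(unif (tau p n))) atTop (nhds (w x)) := by
  filter_upwards [IsUnifLocDoublingMeasure.ae_tendsto_average volume hw 1] with z hz
  have := hz (l := atTop) (fun n => z + tau p n / 2) (fun n => tau p n / 2)
    (tau_half_lim hp) (by
      apply Eventually.of_forall
      intro n
      have := tau_pos p n
      rw [Real.closedBall_eq_Icc, one_mul]
      refine ⟨?_, ?_⟩ <;> (try dsimp only) <;> linarith)
  refine this.congr ?_
  intro n
  have ht := tau_pos p n
  rw [Real.closedBall_eq_Icc, setAverage_eq, integral_unif ht,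
    intervalIntegral.integral_comp_add_left, intervalIntegral.integral_of_le (by linarith),
    restrict_Ioc_eq_restrict_Icc]
  simp only [add_sub_cancel_right, add_assoc, add_halves, add_zero]
  simp [ht.le, smul_eq_mul, measureReal_def]

noncomputable def mea (f : ℝ → ℝ → ℝ) (x : ℝ) : ℝ := ∫ t in (0:ℝ)..1, f x t

lemma unif_one {w : ℝ → ℝ} (hw : Function.Periodic w 1) (x : ℝ) :
    ∫ s, w (x + s) ∂(unif 1) = ∫ s in (0:ℝ)..1, w s := by
  rw [integral_unif one_pos, intervalIntegral.integral_comp_add_left, add_zero, inv_one, one_mul,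
    hw.intervalIntegral_add_eq x 0, zero_add]

lemma Eav_one {f : ℝ → ℝ → ℝ} (hper : BiPeriodic f) (h x y : ℝ) :
    Eav f h 1 x y = ∫ s, mea f (x + s) ∂(unif h) := by
  unfold Eav mea
  congr 1; ext s
  exact unif_one (fun t => hper.2 _ t) y

lemma mea_loc {f : ℝ → ℝ → ℝ} (hf : Good f) : LocallyIntegrable (mea f) := by
  have := hf.loc_avg one_pos true 0
  have e : mea f = fun x => ∫ t, f x (0 + t) ∂(km true 1) := by
    ext x
    rw [show km true 1 = unif 1 from rfl, integral_unif one_pos]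
    simp [mea]
  rw [e]; exact this

lemma Eav_swap {f : ℝ → ℝ → ℝ} (hf : Good f) {h k : ℝ} (hh : 0 < h) (hk : 0 < k) (x y : ℝ) :
    Eav f h k x y = Eav (fun y x => f x y) k h y x := by
  unfold Eav
  have := unif_prob hh
  have := unif_prob hk
  rw [integral_integral_swap]
  exact (hf.shift x y).int_prod hh hk true true

lemma lim_all {p : ℝ} (hp : 1 < p) {f : ℝ → ℝ → ℝ} (hf : Good f) (hper : BiPeriodic f) :
    ∀ᵐ z : ℝ × ℝ, Tendsto (fun n => (Eav f (tau p n) (tau p n) z.1 z.2 - Eav f (tau p n) 1 z.1 z.2)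
      - (Eav f 1 (tau p n) z.1 z.2 - Eav f 1 1 z.1 z.2)) atTop
      (nhds ((f z.1 z.2 - mea f z.1) - (mea (fun y x => f x y) z.2 - ∫ s in (0:ℝ)..1, mea f s))) := by
  have hper' : BiPeriodic (fun y x => f x y) := ⟨fun x y => hper.2 y x, fun x y => hper.1 y x⟩
  have h1 : ∀ᵐ z : ℝ × ℝ, _ := Measure.quasiMeasurePreserving_fst.ae (leb1 hp (mea_loc hf))
  have h2 : ∀ᵐ z : ℝ × ℝ, _ := Measure.quasiMeasurePreserving_snd.ae (leb1 hp (mea_loc hf.swap))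
  filter_upwards [leb2 hp hf, h1, h2] with z a1 a2 a3
  have e1 : ∀ n, Eav f (tau p n) 1 z.1 z.2 = ∫ s, mea f (z.1 + s) ∂(unif (tau p n)) := fun n =>
    Eav_one hper _ _ _
  have e2 : ∀ n, Eav f 1 (tau p n) z.1 z.2 = ∫ s, mea (fun y x => f x y) (z.2 + s) ∂(unif (tau p n)) := by
    intro n
    rw [Eav_swap hf one_pos (tau_pos p n)]
    exact Eav_one hper' _ _ _
  have e3 : Eav f 1 1 z.1 z.2 = ∫ s in (0:ℝ)..1, mea f s := by
    rw [Eav_one hper, unif_one]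
    intro x; simp only [mea, hper.1]
  simp only [e1, e2, e3]
  exact (a1.sub a2).sub (a3.sub tendsto_const_nhds)


open MeasureTheory Filter Set
open scoped ENNReal

lemma mink_fin {p : ℝ} (hp : 1 < p) {ι κ : Type*} (s : Finset ι) (a : κ → ι → ℝ) (M : κ → ℝ≥0∞)
    (h : ∀ z, ∑ i ∈ s, ‖a z i‖ₑ ^ p ≤ M z ^ p) (F : Finset κ) :
    (∑ i ∈ s, ‖∑ z ∈ F, a z i‖ₑ ^ p) ^ (1 / p) ≤ ∑ z ∈ F, M z := by
  classical
  have hp0 : 0 < p := by linarith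
  induction F using Finset.induction_on with
  | empty =>
    simp only [Finset.sum_empty, enorm_zero, ENNReal.zero_rpow_of_pos hp0, Finset.sum_const_zero]
    rw [ENNReal.zero_rpow_of_pos (by positivity)]
  | insert z F hz ih =>
    rw [Finset.sum_insert hz]
    have h1 : (∑ i ∈ s, ‖a z i‖ₑ ^ p) ^ (1 / p) ≤ M z := by
      calc _ ≤ (M z ^ p) ^ (1 / p) := ENNReal.rpow_le_rpow (h z) (by positivity)
        _ = M z := by rw [← ENNReal.rpow_mul, mul_one_div_cancel hp0.ne', ENNReal.rpow_one]
    refine le_trans ?_ (add_le_add h1 ih)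
    refine le_trans ?_ (ENNReal.Lp_add_le s _ _ hp.le)
    apply ENNReal.rpow_le_rpow _ (by positivity)
    apply Finset.sum_le_sum
    intro i _
    rw [Finset.sum_insert hz]
    exact ENNReal.rpow_le_rpow (enorm_add_le _ _) hp0.le

lemma mink {p : ℝ} (hp : 1 < p) {ι κ : Type*} (s : Finset ι) (a : κ → ι → ℝ) (M : κ → ℝ≥0∞)
    (h : ∀ z, ∑ i ∈ s, ‖a z i‖ₑ ^ p ≤ M z ^ p) (b : ι → ℝ) (hb : ∀ i, HasSum (fun z => a z i) (b i)) :
    ∑ i ∈ s, ‖b i‖ₑ ^ p ≤ (∑' z, M z) ^ p := by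
  have hp0 : 0 < p := by linarith
  have lim : Tendsto (fun F : Finset κ => ∑ i ∈ s, ‖∑ z ∈ F, a z i‖ₑ ^ p) atTop
      (nhds (∑ i ∈ s, ‖b i‖ₑ ^ p)) := by
    apply tendsto_finset_sum
    intro i _
    exact (ENNReal.continuous_rpow_const.tendsto _).comp ((continuous_enorm.tendsto _).comp (hb i))
  apply le_of_tendsto' lim
  intro F
  have := (mink_fin hp s a M h F).trans (ENNReal.sum_le_tsum F)
  calc _ = ((∑ i ∈ s, ‖∑ z ∈ F, a z i‖ₑ ^ p) ^ (1 / p)) ^ p := by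
        rw [← ENNReal.rpow_mul, one_div_mul_cancel hp0.ne', ENNReal.rpow_one]
    _ ≤ _ := ENNReal.rpow_le_rpow this hp0.le

section
variable {p : ℝ} (hp : 1 < p) {f : ℝ → ℝ → ℝ} (hf : Good f) (hper : BiPeriodic f)

lemma DD_eq (p : ℝ) (f : ℝ → ℝ → ℝ) (n m : ℕ) (x y : ℝ) : DD p f n m x y =
    (Eav f (tau p (n+1)) (tau p (m+1)) x y - Eav f (tau p (n+1)) (tau p m) x y)
    - (Eav f (tau p n) (tau p (m+1)) x y - Eav f (tau p n) (tau p m) x y) := by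
  simp [DD, Dop, Tn]

include hf in
lemma DD_cont (n m : ℕ) : Continuous (Function.uncurry (DD p f n m)) := by
  have h : ∀ n m, Continuous (Function.uncurry (Eav f (tau p n) (tau p m))) := fun n m =>
    Eav_cont hf (tau_pos p n) (tau_pos p m)
  have e : Function.uncurry (DD p f n m) = fun z =>
    (Function.uncurry (Eav f (tau p (n+1)) (tau p (m+1))) z - Function.uncurry (Eav f (tau p (n+1)) (tau p m)) z)
    - (Function.uncurry (Eav f (tau p n) (tau p (m+1))) z - Function.uncurry (Eav f (tau p n) (tau p m)) z) := by
    ext z; exact DD_eq p f n m z.1 z.2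
  rw [e]
  exact ((h _ _).sub (h _ _)).sub ((h _ _).sub (h _ _))

include hper in
lemma DD_per (n m : ℕ) : BiPeriodic (DD p f n m) := by
  constructor <;> intro x y <;> simp only [DD_eq, (Eav_per hper _ _).1 x y, (Eav_per hper _ _).2 x y]

lemma netOK0 (x : ℝ) : NetOK 0 1 (fun i => x - 1 + i) where
  lt := fun i _ => by push_cast; linarith
  per := by push_cast; ring
  cas := Or.inr ⟨rfl, rfl⟩

include hp hf hper in
lemma DD_bound (n m : ℕ) (x y : ℝ) : ‖DD p f n m x y‖ₑ ≤ Mb p f n m := by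
  have := L4 hp hf hper n m (netOK0 x) (netOK0 y)
  simp at this
  exact (ENNReal.rpow_le_rpow_iff (by linarith : 0 < p)).1 this

lemma ofReal_sum2 {p : ℝ} (hp : 1 < p) {ι : Type*} (s : Finset ι) (a : ι → ℝ) :
    ENNReal.ofReal ((∑ i ∈ s, |a i| ^ p) ^ (1 / p)) = (∑ i ∈ s, ‖a i‖ₑ ^ p) ^ (1 / p) := by
  rw [← ENNReal.ofReal_rpow_of_nonneg (Finset.sum_nonneg fun i _ => by positivity) (by positivity),
    ENNReal.ofReal_sum_of_nonneg (fun i _ => by positivity)]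
  simp only [ofReal_abs_rpow (by linarith : (0:ℝ) ≤ p)]

include hp hf hper in
theorem core (hS : ∑' z : ℕ × ℕ, Mb p f z.1 z.2 < ⊤) : ∃ g : ℝ → ℝ → ℝ,
    Continuous (Function.uncurry g) ∧ BiPeriodic g ∧ MemHp2 p g ∧
    vp2 p g ≤ ∑' z : ℕ × ℕ, Mb p f z.1 z.2 ∧
    ∀ᵐ z : ℝ × ℝ, f z.1 z.2 = g z.1 z.2 + mea f z.1 +
      (mea (fun y x => f x y) z.2 - ∫ s in (0:ℝ)..1, mea f s) := by
  have hp0 : 0 < p := by linarith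
  set S := ∑' z : ℕ × ℕ, Mb p f z.1 z.2 with hSdef
  have bd : ∀ (z : ℕ × ℕ) x y, ‖DD p f z.1 z.2 x y‖ ≤ (Mb p f z.1 z.2).toReal := by
    intro z x y
    have h := DD_bound hp hf hper z.1 z.2 x y
    have ht : Mb p f z.1 z.2 ≠ ⊤ := ENNReal.ne_top_of_tsum_ne_top hS.ne z
    have := ENNReal.toReal_mono ht h
    simpa using this
  have sm : Summable (fun z : ℕ × ℕ => (Mb p f z.1 z.2).toReal) := ENNReal.summable_toReal hS.ne
  set g : ℝ → ℝ → ℝ := fun x y => ∑' z : ℕ × ℕ, DD p f z.1 z.2 x y with hg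
  have hs : ∀ x y, HasSum (fun z : ℕ × ℕ => DD p f z.1 z.2 x y) (g x y) := by
    intro x y
    exact (Summable.of_norm_bounded sm (fun z => bd z x y)).hasSum
  have net : ∀ {ε δ : ℝ} {M N : ℕ} {x y : ℕ → ℝ}, NetOK ε M x → NetOK δ N y →
      ∑ i ∈ Finset.range M ×ˢ Finset.range N,
      ‖(g (x (i.1+1)) (y (i.2+1)) - δ * g (x (i.1+1)) (y i.2))
        - ε * (g (x i.1) (y (i.2+1)) - δ * g (x i.1) (y i.2))‖ₑ ^ p ≤ S ^ p := by
    intro ε δ M N x y hx hy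
    apply mink hp _ (fun (z : ℕ × ℕ) (i : ℕ × ℕ) =>
      (DD p f z.1 z.2 (x (i.1+1)) (y (i.2+1)) - δ * DD p f z.1 z.2 (x (i.1+1)) (y i.2))
        - ε * (DD p f z.1 z.2 (x i.1) (y (i.2+1)) - δ * DD p f z.1 z.2 (x i.1) (y i.2)))
    · intro z
      rw [Finset.sum_product]
      exact L4 hp hf hper z.1 z.2 hx hy
    · intro i
      exact ((hs _ _).sub ((hs _ _).mul_left δ)).sub (((hs _ _).sub ((hs _ _).mul_left δ)).mul_left ε)
  have root : ∀ A : ℝ≥0∞, A ≤ S ^ p → A ^ (1 / p) ≤ S := by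
    intro A hA
    calc _ ≤ (S ^ p) ^ (1 / p) := ENNReal.rpow_le_rpow hA (by positivity)
      _ = S := by rw [← ENNReal.rpow_mul, mul_one_div_cancel hp0.ne', ENNReal.rpow_one]
  have v2 : vp2 p g ≤ S := by
    unfold vp2
    simp only [iSup_le_iff]
    intro m n x y hx hx1 hy hy1
    rw [← Finset.sum_product', ofReal_sum2 hp]
    apply root
    refine le_trans (le_of_eq ?_) (net (ε := 1) (δ := 1) ⟨hx, hx1, Or.inl rfl⟩ ⟨hy, hy1, Or.inl rfl⟩)
    apply Finset.sum_congr rfl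
    intro i _
    congr 2; ring
  have vx : ∀ x, vp p (fun y => g x y) ≤ S := by
    intro x
    unfold vp
    simp only [iSup_le_iff]
    intro n y hy hy1
    rw [ofReal_sum2 hp]
    apply root
    refine le_trans (le_of_eq ?_) (net (δ := 1) (netOK0 x) ⟨hy, hy1, Or.inl rfl⟩)
    rw [Finset.sum_product]
    simp
  have vy : ∀ y, vp p (fun x => g x y) ≤ S := by
    intro y
    unfold vp
    simp only [iSup_le_iff]
    intro n x hx hx1
    rw [ofReal_sum2 hp]
    apply root
    refine le_trans (le_of_eq ?_) (net (ε := 1) ⟨hx, hx1, Or.inl rfl⟩ (netOK0 y))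
    rw [Finset.sum_product]
    simp
  refine ⟨g, ?_, ?_, ⟨v2.trans_lt hS, fun x => (vx x).trans_lt hS, fun y => (vy y).trans_lt hS⟩, v2, ?_⟩
  · have : Continuous (fun w : ℝ × ℝ => ∑' z : ℕ × ℕ, DD p f z.1 z.2 w.1 w.2) :=
      continuous_tsum (fun z => DD_cont hf z.1 z.2) sm (fun z w => bd z w.1 w.2)
    exact this
  · constructor
    · intro x y; simp only [hg, (DD_per hper _ _).1 x y]
    · intro x y; simp only [hg, (DD_per hper _ _).2 x y]
  · filter_upwards [lim_all hp hf hper] with z hz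
    have sq : Tendsto (fun N : ℕ => Finset.range N ×ˢ Finset.range N) atTop atTop := by
      apply tendsto_atTop_finset_of_monotone
      · intro a b hab
        exact Finset.product_subset_product (Finset.range_mono hab) (Finset.range_mono hab)
      · intro w
        refine ⟨max w.1 w.2 + 1, ?_⟩
        simp only [Finset.mem_product, Finset.mem_range]
        omega
    have l2 := (hs z.1 z.2).comp sq
    have tel : ∀ N : ℕ, ∑ w ∈ Finset.range N ×ˢ Finset.range N, DD p f w.1 w.2 z.1 z.2 =
        (Eav f (tau p N) (tau p N) z.1 z.2 - Eav f (tau p N) 1 z.1 z.2)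
      - (Eav f 1 (tau p N) z.1 z.2 - Eav f 1 1 z.1 z.2) := by
      intro N
      rw [Finset.sum_product]
      have inner : ∀ n, ∑ m ∈ Finset.range N, DD p f n m z.1 z.2 =
          (Eav f (tau p (n+1)) (tau p N) z.1 z.2 - Eav f (tau p (n+1)) (tau p 0) z.1 z.2)
          - (Eav f (tau p n) (tau p N) z.1 z.2 - Eav f (tau p n) (tau p 0) z.1 z.2) := by
        intro n
        simp only [DD_eq]
        rw [Finset.sum_sub_distrib, Finset.sum_range_sub (fun m => Eav f (tau p (n+1)) (tau p m) z.1 z.2),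
          Finset.sum_range_sub (fun m => Eav f (tau p n) (tau p m) z.1 z.2)]
      simp only [inner]
      rw [Finset.sum_range_sub (fun n => Eav f (tau p n) (tau p N) z.1 z.2 - Eav f (tau p n) (tau p 0) z.1 z.2),
        tau_zero]
    have l3 : Tendsto (fun N : ℕ => (Eav f (tau p N) (tau p N) z.1 z.2 - Eav f (tau p N) 1 z.1 z.2)
      - (Eav f 1 (tau p N) z.1 z.2 - Eav f 1 1 z.1 z.2)) atTop (nhds (g z.1 z.2)) := by
      refine l2.congr ?_
      intro N; exact tel N
    have := tendsto_nhds_unique l3 hz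
    rw [this]; ring

end


open MeasureTheory Filter Set
open scoped ENNReal
/-- If `1 < p < ∞`, `f ∈ L^p([0,1]²)` and `I_p(f) < ∞`, then there exist
a continuous `g ∈ H_p⁽²⁾` and univariate `φ₁, φ₂` with `f = g + φ₁ + φ₂` a.e. and
`v_p⁽²⁾(g) ≤ A [ω(f;1,1)_p + (1/(pp')) K_p(f) + (1/(pp'))² I_p(f)]` for an absolute
constant `A`. If moreover `f ∈ L^p_0([0,1]²)`, one may take `φ₁ = φ₂ = 0`. -/
theorem statement3 :
    ∃ A : ℝ, 0 < A ∧
      ∀ (p : ℝ), 1 < p → ∀ f : ℝ → ℝ → ℝ, MemLp2 p f → Ip p f < ⊤ →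
        (∃ (g : ℝ → ℝ → ℝ) (φ₁ φ₂ : ℝ → ℝ),
          Continuous (Function.uncurry g) ∧ BiPeriodic g ∧ MemHp2 p g ∧
          (∀ᵐ z : ℝ × ℝ ∂volume, f z.1 z.2 = g z.1 z.2 + φ₁ z.1 + φ₂ z.2) ∧
          vp2 p g ≤ ENNReal.ofReal A *
            (mixedModulus p f 1 1
              + ENNReal.ofReal (1 / (p * (p / (p - 1)))) * Kp p f
              + ENNReal.ofReal ((1 / (p * (p / (p - 1)))) ^ 2) * Ip p f)) ∧
        (MemLp20 p f →
          ∃ g : ℝ → ℝ → ℝ,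
            Continuous (Function.uncurry g) ∧ BiPeriodic g ∧ MemHp2 p g ∧
            (∀ᵐ z : ℝ × ℝ ∂volume, f z.1 z.2 = g z.1 z.2) ∧
            vp2 p g ≤ ENNReal.ofReal A *
              (mixedModulus p f 1 1
                + ENNReal.ofReal (1 / (p * (p / (p - 1)))) * Kp p f
                + ENNReal.ofReal ((1 / (p * (p / (p - 1)))) ^ 2) * Ip p f)) := by
  refine ⟨65536, by norm_num, ?_⟩
  intro p hp f hf hI
  obtain ⟨F, hG, hper, hω, hae, hae1, hae2⟩ := modif hp hf
  have eI : Ip p F = Ip p f := by simp only [Ip, hω]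
  have eK : Kp p F = Kp p f := by simp only [Kp, hω]
  have hS := sumM hp hG.meas hper
  rw [eI, eK, hω] at hS
  have hKfin : Kp p f < ⊤ :=
    (Kp_le hp hf.1 hf.2.1).trans_lt (ENNReal.mul_lt_top (by simp) hI)
  have hfin : ∑' z : ℕ × ℕ, Mb p F z.1 z.2 < ⊤ := by
    refine hS.trans_lt (ENNReal.mul_lt_top (by simp) ?_)
    refine ENNReal.add_lt_top.2 ⟨ENNReal.add_lt_top.2 ⟨mixed_lt_top hp hf 1 1, ?_⟩, ?_⟩
    · exact ENNReal.mul_lt_top (by simp) hKfin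
    · exact ENNReal.mul_lt_top (by simp) hI
  obtain ⟨g, gc, gp, gH, gv, gae⟩ := core hp hG hper hfin
  refine ⟨⟨g, mea F, fun y => mea (fun y x => F x y) y - ∫ s in (0:ℝ)..1, mea F s, gc, gp, gH, ?_,
    gv.trans hS⟩, ?_⟩
  · filter_upwards [hae, gae] with z h1 h2
    rw [h1, h2]
  · rintro ⟨_, z1, z2⟩
    have m1 : ∀ᵐ x, mea F x = 0 := by
      filter_upwards [z1, hae1] with x hx1 hx2
      rw [← hx1]
      apply intervalIntegral.integral_congr_ae
      filter_upwards [hx2] with y hy _ using hy.symm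
    have m2 : ∀ᵐ y, mea (fun y x => F x y) y = 0 := by
      filter_upwards [z2, hae2] with y hy1 hy2
      rw [← hy1]
      apply intervalIntegral.integral_congr_ae
      filter_upwards [hy2] with x hx _ using hx.symm
    have m3 : ∫ s in (0:ℝ)..1, mea F s = 0 := by
      rw [intervalIntegral.integral_congr_ae (g := fun _ => (0:ℝ))]
      · simp
      · filter_upwards [m1] with x hx _ using hx
    refine ⟨g, gc, gp, gH, ?_, gv.trans hS⟩
    have n1 : ∀ᵐ z : ℝ × ℝ, mea F z.1 = 0 := Measure.quasiMeasurePreserving_fst.ae m1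
    have n2 : ∀ᵐ z : ℝ × ℝ, mea (fun y x => F x y) z.2 = 0 :=
      Measure.quasiMeasurePreserving_snd.ae m2
    filter_upwards [hae, gae, n1, n2] with z h1 h2 h3 h4
    rw [h1, h2, h3, h4, m3]; ring
end

section
/- Let 1 < p < ∞ and f ∈ L^p([0,1]²). Then K_p(f) ≤ (4/p')·I_p(f), where p' = p/(p−1). -/
open MeasureTheory Filter Set
open scoped ENNReal

theorem aux_per {G : ℝ → ℝ≥0∞} (hG : ∀ x, G (x + 1) = G x) (h : ℝ) :
    ∫⁻ x in Set.Icc (0:ℝ) 1, G (x + h) = ∫⁻ x in Set.Icc (0:ℝ) 1, G x := by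
  have hper : Function.Periodic G 1 := hG
  rw [Measure.restrict_congr_set (Ioc_ae_eq_Icc (a := (0:ℝ)) (b := 1)).symm]
  have h1 := (measurePreserving_add_right (volume : Measure ℝ) h).setLIntegral_comp_emb
    (measurableEmbedding_addRight h) G (Set.Ioc (0:ℝ) 1)
  rw [h1, Set.image_add_const_Ioc]
  have e := IsAddFundamentalDomain.setLIntegral_eq (isAddFundamentalDomain_Ioc one_pos h)
    (isAddFundamentalDomain_Ioc one_pos (0:ℝ)) G hper.map_vadd_zmultiples
  rw [zero_add, add_comm 1 h]
  rw [zero_add] at e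
  exact e

theorem aux_norm_eq {p : ℝ} (hp : 1 < p) {g : ℝ → ℝ → ℝ} (hg : Measurable (Function.uncurry g)) :
    lpNorm2 p g = eLpNorm (Function.uncurry g) (ENNReal.ofReal p)
      ((volume.restrict (Set.Icc (0:ℝ) 1)).prod (volume.restrict (Set.Icc (0:ℝ) 1))) := by
  have hp0 : 0 < p := by linarith
  rw [eLpNorm_eq_lintegral_rpow_enorm_toReal (by simpa using hp0) ENNReal.ofReal_ne_top,
    ENNReal.toReal_ofReal hp0.le, lintegral_prod _ (by fun_prop)]
  unfold lpNorm2
  congr 1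
  refine lintegral_congr fun x => lintegral_congr fun y => ?_
  rw [← ENNReal.ofReal_rpow_of_nonneg (abs_nonneg _) hp0.le, Function.uncurry_apply_pair,
    ← Real.norm_eq_abs, ofReal_norm]

theorem aux_tri {p : ℝ} (hp : 1 < p) {g k : ℝ → ℝ → ℝ} (hg : Measurable (Function.uncurry g))
    (hk : Measurable (Function.uncurry k)) :
    lpNorm2 p (fun x y => g x y + k x y) ≤ lpNorm2 p g + lpNorm2 p k := by
  rw [aux_norm_eq hp hg, aux_norm_eq hp hk, aux_norm_eq hp (by exact hg.add hk)]
  exact eLpNorm_add_le hg.aestronglyMeasurable hk.aestronglyMeasurable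
    (by rw [← ENNReal.ofReal_one]; exact ENNReal.ofReal_le_ofReal hp.le)

theorem aux_meas {g : ℝ → ℝ → ℝ} (hg : Measurable (Function.uncurry g)) (s t : ℝ) :
    Measurable (Function.uncurry fun x y => g (x + s) (y + t)) := by
  exact hg.comp (f := fun z : ℝ × ℝ => (z.1 + s, z.2 + t)) (by fun_prop)

theorem aux_trans {p : ℝ} {g : ℝ → ℝ → ℝ} (hg : BiPeriodic g) (s t : ℝ) :
    lpNorm2 p (fun x y => g (x + s) (y + t)) = lpNorm2 p g := by
  unfold lpNorm2
  congr 1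
  have h1 : ∀ x, ∫⁻ y in Set.Icc (0:ℝ) 1, ENNReal.ofReal (|g (x + s) (y + t)| ^ p)
      = ∫⁻ y in Set.Icc (0:ℝ) 1, ENNReal.ofReal (|g (x + s) y| ^ p) := fun x =>
    aux_per (G := fun y => ENNReal.ofReal (|g (x + s) y| ^ p)) (fun y => by simp only [hg.2]) t
  simp_rw [h1]
  exact aux_per (G := fun x => ∫⁻ y in Set.Icc (0:ℝ) 1, ENNReal.ofReal (|g x y| ^ p))
    (fun y => by simp only [hg.1]) s

theorem aux_mul {p : ℝ} (hp : 1 < p) {g : ℝ → ℝ → ℝ} (hg : Measurable (Function.uncurry g))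
    (hb : BiPeriodic g) (s t : ℝ) (n : ℕ) :
    lpNorm2 p (fun x y => g (x + n * s) (y + n * t) - g x y)
      ≤ n * lpNorm2 p (fun x y => g (x + s) (y + t) - g x y) := by
  have hp0 : 0 < p := by linarith
  induction n with
  | zero => simp [lpNorm2, Real.zero_rpow hp0.ne', hp0]
  | succ n ih =>
    have hb2 : BiPeriodic (fun x y => g (x + s) (y + t) - g x y) := by
      constructor
      · intro x y
        simp only [add_right_comm x 1 s, hb.1]
      · intro x y
        simp only [add_right_comm y 1 t, hb.2]
    have hm2 : Measurable (Function.uncurry fun x y => g (x + s) (y + t) - g x y) :=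
      (aux_meas hg s t).sub hg
    have e : (fun x y => g (x + (n + 1 : ℕ) * s) (y + (n + 1 : ℕ) * t) - g x y)
        = fun x y => (g (x + n * s + s) (y + n * t + t) - g (x + n * s) (y + n * t))
          + (g (x + n * s) (y + n * t) - g x y) := by
      funext x y
      push_cast
      rw [show x + ((n:ℝ) + 1) * s = x + n * s + s by ring,
        show y + ((n:ℝ) + 1) * t = y + n * t + t by ring]
      ring
    rw [e]
    have hm3 : Measurable (Function.uncurry fun x y => g (x + n * s) (y + n * t) - g x y) :=
      (aux_meas hg _ _).sub hg
    refine (aux_tri hp (aux_meas hm2 (n * s) (n * t)) hm3).trans ?_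
    rw [aux_trans hb2]
    push_cast
    rw [add_mul, one_mul, add_comm]
    gcongr

theorem aux_ceil {v : ℝ} (hv : v ∈ Set.Ioc (0:ℝ) 1) :
    ∃ n : ℕ, 0 < n ∧ 1 ≤ n * v ∧ ENNReal.ofReal (v / 2) * n ≤ 1 := by
  obtain ⟨h0, h1⟩ := hv
  refine ⟨⌈1 / v⌉₊, Nat.ceil_pos.2 (by positivity), ?_, ?_⟩
  · have := Nat.le_ceil (1 / v)
    rwa [div_le_iff₀ h0] at this
  · have := Nat.ceil_lt_add_one (a := 1 / v) (by positivity)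
    rw [← ENNReal.ofReal_natCast, ← ENNReal.ofReal_mul (by positivity), ← ENNReal.ofReal_one]
    apply ENNReal.ofReal_le_ofReal
    have h2 : v / 2 * (⌈1 / v⌉₊ : ℝ) ≤ v / 2 * (1 / v + 1) := by gcongr
    have h3 : v / 2 * (1 / v + 1) = 1 / 2 + v / 2 := by field_simp
    linarith

theorem aux_arith {a b c : ℝ≥0∞} {n : ℕ} (h1 : a * n ≤ 1) (h2 : b ≤ n * c) : a * b ≤ c :=
  calc a * b ≤ a * (n * c) := by gcongr
    _ = (a * n) * c := by ring
    _ ≤ 1 * c := by gcongr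
    _ = c := one_mul c

theorem aux_right {p : ℝ} (hp : 1 < p) {f : ℝ → ℝ → ℝ} (hf : MemLp2 p f) (u : ℝ) {v : ℝ}
    (hv : v ∈ Set.Ioc (0:ℝ) 1) :
    ENNReal.ofReal (v / 2) * mixedModulus p f u 1 ≤ mixedModulus p f u v := by
  obtain ⟨n, hn, hnv, hn2⟩ := aux_ceil hv
  refine aux_arith hn2 ?_
  have hn' : (0:ℝ) < n := by exact_mod_cast hn
  refine iSup₂_le fun s hs => iSup₂_le fun t ht => ?_
  have hm : Measurable (Function.uncurry fun x y => f (x + s) y - f x y) := by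
    have := (aux_meas hf.1 s 0).sub hf.1
    simpa using! this
  have hb : BiPeriodic (fun x y => f (x + s) y - f x y) := by
    constructor
    · intro x y
      simp only [add_right_comm x 1 s, hf.2.1.1]
    · intro x y
      simp only [hf.2.1.2]
  have key := aux_mul hp hm hb 0 (t / n) n
  simp only [mul_zero, add_zero, mul_div_cancel₀ t hn'.ne'] at key
  have e : ∀ t, (fun x y => f (x + s) (y + t) - f x (y + t) - (f (x + s) y - f x y))
    = fun x y => f (x + s) (y + t) - f (x + s) y - f x (y + t) + f x y := by
    intro t; funext x y; ring
  rw [e, e] at key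
  refine key.trans ?_
  gcongr
  refine le_trans ?_ (le_iSup₂ s hs)
  refine le_iSup₂ (f := fun (t : ℝ) (_ : t ∈ Set.Icc 0 v) => lpNorm2 p
    (fun x y => f (x + s) (y + t) - f (x + s) y - f x (y + t) + f x y)) (t / n)
    ⟨div_nonneg ht.1 hn'.le, ?_⟩
  rw [div_le_iff₀ hn']
  linarith [ht.2]

theorem aux_left {p : ℝ} (hp : 1 < p) {f : ℝ → ℝ → ℝ} (hf : MemLp2 p f) (v : ℝ) {u : ℝ}
    (hu : u ∈ Set.Ioc (0:ℝ) 1) :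
    ENNReal.ofReal (u / 2) * mixedModulus p f 1 v ≤ mixedModulus p f u v := by
  obtain ⟨n, hn, hnv, hn2⟩ := aux_ceil hu
  refine aux_arith hn2 ?_
  have hn' : (0:ℝ) < n := by exact_mod_cast hn
  refine iSup₂_le fun s hs => iSup₂_le fun t ht => ?_
  have hm : Measurable (Function.uncurry fun x y => f x (y + t) - f x y) := by
    have := (aux_meas hf.1 0 t).sub hf.1
    simpa using! this
  have hb : BiPeriodic (fun x y => f x (y + t) - f x y) := by
    constructor
    · intro x y
      simp only [hf.2.1.1]
    · intro x y
      simp only [add_right_comm y 1 t, hf.2.1.2]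
  have key := aux_mul hp hm hb (s / n) 0 n
  simp only [mul_zero, add_zero, mul_div_cancel₀ s hn'.ne'] at key
  have e : ∀ s, (fun x y => f (x + s) (y + t) - f (x + s) y - (f x (y + t) - f x y))
    = fun x y => f (x + s) (y + t) - f (x + s) y - f x (y + t) + f x y := by
    intro t; funext x y; ring
  rw [e, e] at key
  refine key.trans ?_
  gcongr
  have hs' : s / n ∈ Set.Icc 0 u := by
    refine ⟨div_nonneg hs.1 hn'.le, ?_⟩
    rw [div_le_iff₀ hn']
    linarith [hs.2]
  refine le_trans ?_ (le_iSup₂ (s / n) hs')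
  exact le_iSup₂ (f := fun (t : ℝ) (_ : t ∈ Set.Icc 0 v) => lpNorm2 p
    (fun x y => f (x + s / n) (y + t) - f (x + s / n) y - f x (y + t) + f x y)) t ht

theorem aux_int {p : ℝ} (hp : 1 < p) :
    ∫⁻ v in Set.Ioc (0:ℝ) 1, ENNReal.ofReal (v ^ (-(1/p)) / v) * ENNReal.ofReal (v / 2)
      = ENNReal.ofReal (p / (p - 1) / 2) := by
  have hp0 : 0 < p := by linarith
  have h1p : -1 < -(1/p) := by
    rw [neg_lt_neg_iff, div_lt_one hp0]; exact hp
  have e : ∫⁻ v in Set.Ioc (0:ℝ) 1, ENNReal.ofReal (v ^ (-(1/p)) / v) * ENNReal.ofReal (v / 2)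
      = ∫⁻ v in Set.Ioc (0:ℝ) 1, ENNReal.ofReal (v ^ (-(1/p)) / 2) := by
    refine setLIntegral_congr_fun measurableSet_Ioc fun v hv => ?_
    have hv0 : 0 < v := hv.1
    rw [← ENNReal.ofReal_mul (by positivity)]
    congr 1
    field_simp
  have hi : IntervalIntegrable (fun v : ℝ => v ^ (-(1/p)) / 2) volume 0 1 :=
    (intervalIntegral.intervalIntegrable_rpow' h1p).div_const 2
  rw [intervalIntegrable_iff_integrableOn_Ioc_of_le zero_le_one] at hi
  rw [e, ← ofReal_integral_eq_lintegral_ofReal hi, ← intervalIntegral.integral_of_le zero_le_one,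
    intervalIntegral.integral_div, integral_rpow (Or.inl h1p)]
  · congr 1
    have : -(1/p) + 1 ≠ 0 := by linarith
    have : p - 1 ≠ 0 := by linarith
    rw [Real.one_rpow, Real.zero_rpow ‹_›,
      show -(1/p) + 1 = (p - 1) / p by field_simp; ring]
    field_simp
    try ring
  · filter_upwards [ae_restrict_mem measurableSet_Ioc] with v hv
    have hv0 : 0 < v := hv.1
    simp only [Pi.zero_apply]
    positivity

theorem aux_w (p : ℝ) {u v : ℝ} (hu : 0 < u) (hv : 0 < v) :
    ENNReal.ofReal ((u * v) ^ (-(1/p)) / (u * v))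
      = ENNReal.ofReal (u ^ (-(1/p)) / u) * ENNReal.ofReal (v ^ (-(1/p)) / v) := by
  rw [← ENNReal.ofReal_mul (by positivity), Real.mul_rpow hu.le hv.le]
  congr 1
  field_simp

theorem aux_A {p : ℝ} (hp : 1 < p) {f : ℝ → ℝ → ℝ} (hf : MemLp2 p f) :
    ENNReal.ofReal (p / (p - 1) / 2) * (∫⁻ t in Set.Ioc (0:ℝ) 1,
      ENNReal.ofReal (t ^ (-(1/p)) / t) * mixedModulus p f t 1) ≤ Ip p f := by
  rw [← lintegral_const_mul' _ _ ENNReal.ofReal_ne_top]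
  refine setLIntegral_mono' measurableSet_Ioc fun u hu => ?_
  calc _ = ∫⁻ v in Set.Ioc (0:ℝ) 1, (ENNReal.ofReal (v ^ (-(1/p)) / v) * ENNReal.ofReal (v / 2))
          * (ENNReal.ofReal (u ^ (-(1/p)) / u) * mixedModulus p f u 1) := by
        rw [lintegral_mul_const _ (by fun_prop), aux_int hp]
    _ ≤ _ := by
        refine setLIntegral_mono' measurableSet_Ioc fun v hv => ?_
        rw [aux_w p hu.1 hv.1]
        calc _ = (ENNReal.ofReal (u ^ (-(1/p)) / u) * ENNReal.ofReal (v ^ (-(1/p)) / v)) *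
              (ENNReal.ofReal (v / 2) * mixedModulus p f u 1) := by ring
          _ ≤ _ := by
            gcongr
            exact aux_right hp hf u hv

theorem aux_B {p : ℝ} (hp : 1 < p) {f : ℝ → ℝ → ℝ} (hf : MemLp2 p f) :
    ENNReal.ofReal (p / (p - 1) / 2) * (∫⁻ t in Set.Ioc (0:ℝ) 1,
      ENNReal.ofReal (t ^ (-(1/p)) / t) * mixedModulus p f 1 t) ≤ Ip p f := by
  rw [← aux_int hp, ← lintegral_mul_const _ (by fun_prop)]
  refine setLIntegral_mono' measurableSet_Ioc fun u hu => ?_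
  rw [← lintegral_const_mul' _ _ (ENNReal.mul_ne_top ENNReal.ofReal_ne_top ENNReal.ofReal_ne_top)]
  refine setLIntegral_mono' measurableSet_Ioc fun v hv => ?_
  rw [aux_w p hu.1 hv.1]
  calc _ = (ENNReal.ofReal (u ^ (-(1/p)) / u) * ENNReal.ofReal (v ^ (-(1/p)) / v)) *
        (ENNReal.ofReal (u / 2) * mixedModulus p f 1 v) := by ring
    _ ≤ _ := by
      gcongr
      exact aux_left hp hf v hu

theorem aux_mono (p : ℝ) (f : ℝ → ℝ → ℝ) : Monotone (fun t => mixedModulus p f t 1) := by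
  intro a b hab
  refine iSup₂_le fun s hs => ?_
  exact le_iSup₂ (f := fun (s : ℝ) (_ : s ∈ Set.Icc 0 b) => ⨆ (t : ℝ) (_ : t ∈ Set.Icc (0:ℝ) 1),
    lpNorm2 p (fun x y => f (x + s) (y + t) - f (x + s) y - f x (y + t) + f x y)) s
    ⟨hs.1, hs.2.trans hab⟩

/-- For `1 < p < ∞` and `f ∈ L^p([0,1]²)`:
`K_p(f) ≤ (4/p') I_p(f)` (in `[0,∞]`), where `p' = p/(p-1)`. -/
theorem statement4 (p : ℝ) (hp : 1 < p) (f : ℝ → ℝ → ℝ) (hf : MemLp2 p f) :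
    Kp p f ≤ ENNReal.ofReal (4 / (p / (p - 1))) * Ip p f := by
  have hp1 : 0 < p - 1 := by linarith
  have hp0 : 0 < p := by linarith
  have hm := (aux_mono p f).measurable
  unfold Kp
  simp_rw [mul_add]
  rw [lintegral_add_left (by fun_prop)]
  have hA := aux_A hp hf
  have hB := aux_B hp hf
  set A := ∫⁻ t in Set.Ioc (0:ℝ) 1, ENNReal.ofReal (t ^ (-(1/p)) / t) * mixedModulus p f t 1
  set B := ∫⁻ t in Set.Ioc (0:ℝ) 1, ENNReal.ofReal (t ^ (-(1/p)) / t) * mixedModulus p f 1 t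
  have h2 : ∀ X : ℝ≥0∞, ENNReal.ofReal (2 / (p / (p - 1))) *
      (ENNReal.ofReal (p / (p - 1) / 2) * X) = X := by
    intro X
    rw [← mul_assoc, ← ENNReal.ofReal_mul (by positivity),
      show 2 / (p / (p - 1)) * (p / (p - 1) / 2) = 1 by field_simp, ENNReal.ofReal_one, one_mul]
  have h4 : ENNReal.ofReal (4 / (p / (p - 1))) = ENNReal.ofReal (2 / (p / (p - 1)))
      + ENNReal.ofReal (2 / (p / (p - 1))) := by
    rw [← ENNReal.ofReal_add (by positivity) (by positivity)]
    congr 1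
    ring
  rw [h4, add_mul]
  refine add_le_add ?_ ?_
  · rw [← h2 A]
    gcongr
  · rw [← h2 B]
    gcongr
end

section
/- Let 1 ≤ p < ∞, n ∈ ℕ, and t_n(x) = sin(2πnx). Then n^{1/p} ≤ v_p(t_n) ≤ 2π·n^{1/p}, and ω(t_n;δ)_p ≤ 2π·min(1, nδ) for all 0 < δ ≤ 1. -/
open MeasureTheory Filter Set
open scoped ENNReal

theorem s9_lip (n : ℕ) (x y : ℝ) :
    |Real.sin (2 * Real.pi * n * y) - Real.sin (2 * Real.pi * n * x)| ≤ 2 * Real.pi * n * |y - x| := by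
  have h := (Real.lipschitzWith_sin).dist_le_mul (2 * Real.pi * n * y) (2 * Real.pi * n * x)
  rw [Real.dist_eq, Real.dist_eq, ← mul_sub, abs_mul, NNReal.coe_one, one_mul,
    abs_of_nonneg (by positivity : (0:ℝ) ≤ 2 * Real.pi * n)] at h
  exact h

theorem s9_two (a b : ℝ) : |Real.sin a - Real.sin b| ≤ 2 * Real.pi := by
  have h1 := Real.neg_one_le_sin a
  have h2 := Real.sin_le_one a
  have h3 := Real.neg_one_le_sin b
  have h4 := Real.sin_le_one b
  have := Real.pi_gt_three
  rw [abs_le]; constructor <;> linarith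

theorem s9_lower (p : ℝ) (hp : 1 ≤ p) (n : ℕ) (hn : 1 ≤ n) :
    ENNReal.ofReal ((n : ℝ) ^ (1 / p))
        ≤ vp p (fun x => Real.sin (2 * Real.pi * n * x)) := by
  have hn0 : (0:ℝ) < n := by exact_mod_cast hn
  have hv : ∀ k : ℕ, Real.sin (2 * Real.pi * n * ((k:ℝ) / (2 * n) + 1 / (4 * n))) = (-1) ^ k := by
    intro k
    rw [← Real.cos_nat_mul_pi, ← Real.sin_add_pi_div_two]
    congr 1
    field_simp
    ring
  unfold vp
  refine le_iSup_of_le (2 * n) (le_iSup_of_le (fun k : ℕ => (k:ℝ) / (2 * n) + 1 / (4 * n))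
    (le_iSup_of_le ?_ (le_iSup_of_le ?_ ?_)))
  · intro i _
    push_cast
    gcongr
    linarith
  · push_cast
    field_simp
    ring
  · apply ENNReal.ofReal_le_ofReal
    apply Real.rpow_le_rpow hn0.le _ (by positivity)
    have h1 : ∀ k ∈ Finset.range (2 * n), (1:ℝ) ≤
        |Real.sin (2 * Real.pi * n * (((k+1 : ℕ):ℝ) / (2 * n) + 1 / (4 * n)))
          - Real.sin (2 * Real.pi * n * ((k:ℝ) / (2 * n) + 1 / (4 * n)))| ^ p := by
      intro k _
      rw [hv, hv]
      apply Real.one_le_rpow _ (by linarith)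
      have : ((-1:ℝ)) ^ (k+1) - (-1) ^ k = (-1) ^ k * (-2) := by ring
      rw [this, abs_mul, abs_pow]
      norm_num
    have h2 := Finset.sum_le_sum h1
    simp only [Finset.sum_const, Finset.card_range, nsmul_eq_mul, mul_one] at h2
    refine le_trans ?_ h2
    push_cast
    linarith

theorem s9_upper (p : ℝ) (hp : 1 ≤ p) (n : ℕ) :
    vp p (fun x => Real.sin (2 * Real.pi * n * x))
        ≤ ENNReal.ofReal (2 * Real.pi * (n : ℝ) ^ (1 / p)) := by
  have hpi := Real.pi_pos
  unfold vp
  refine iSup_le fun m => iSup_le fun x => iSup_le fun hx => iSup_le fun hm => ?_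
  apply ENNReal.ofReal_le_ofReal
  have h1 : ∀ k ∈ Finset.range m,
      |Real.sin (2 * Real.pi * n * x (k+1)) - Real.sin (2 * Real.pi * n * x k)| ^ p
        ≤ (2 * Real.pi) ^ p * n * (x (k+1) - x k) := by
    intro k hk
    have hk' := hx k (Finset.mem_range.1 hk)
    have hl := s9_lip n (x k) (x (k+1))
    rw [abs_of_pos (sub_pos.2 hk')] at hl
    have ht := s9_two (2 * Real.pi * n * x (k+1)) (2 * Real.pi * n * x k)
    set A := |Real.sin (2 * Real.pi * n * x (k+1)) - Real.sin (2 * Real.pi * n * x k)|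
    have hA : 0 ≤ A := abs_nonneg _
    have e : ∀ y : ℝ, 0 ≤ y → y ^ p = y ^ (p-1) * y := by
      intro y hy
      have := Real.rpow_add_of_nonneg hy (sub_nonneg.2 hp) zero_le_one
      rwa [sub_add_cancel, Real.rpow_one] at this
    rw [e A hA, e (2 * Real.pi) (by positivity)]
    calc A ^ (p-1) * A ≤ (2 * Real.pi) ^ (p-1) * (2 * Real.pi * n * (x (k+1) - x k)) := by
          apply mul_le_mul _ hl hA (by positivity)
          exact Real.rpow_le_rpow hA ht (by linarith)
      _ = _ := by ring
  have h2 := Finset.sum_le_sum h1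
  rw [← Finset.mul_sum, Finset.sum_range_sub, hm, add_sub_cancel_left, mul_one] at h2
  calc _ ≤ ((2 * Real.pi) ^ p * n) ^ (1 / p) := by
        apply Real.rpow_le_rpow _ h2 (by positivity)
        exact Finset.sum_nonneg fun i _ => Real.rpow_nonneg (abs_nonneg _) _
    _ = _ := by
        rw [Real.mul_rpow (by positivity) (by positivity), ← Real.rpow_mul (by positivity),
          mul_one_div_cancel (by linarith), Real.rpow_one]

theorem s9_mod (p : ℝ) (hp : 1 ≤ p) (n : ℕ) (δ : ℝ) :
      modulus1 p (fun x => Real.sin (2 * Real.pi * n * x)) δ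
        ≤ ENNReal.ofReal (2 * Real.pi * min 1 ((n : ℝ) * δ)) := by
  have hpi := Real.pi_pos
  unfold modulus1
  refine iSup_le fun h => iSup_le fun hh => ?_
  set C := 2 * Real.pi * min 1 ((n : ℝ) * δ) with hC
  have hb : ∀ x : ℝ, |Real.sin (2 * Real.pi * n * (x + h)) - Real.sin (2 * Real.pi * n * x)| ≤ C := by
    intro x
    rw [hC, mul_min_of_nonneg _ _ (by positivity)]
    refine le_min (by rw [mul_one]; exact s9_two _ _) ?_
    refine (s9_lip n x (x + h)).trans ?_
    rw [add_sub_cancel_left, abs_of_nonneg hh.1, ← mul_assoc]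
    exact mul_le_mul_of_nonneg_left hh.2 (by positivity)
  have hC0 : 0 ≤ C := (abs_nonneg _).trans (hb 0)
  unfold lpNorm1
  have h1 : (∫⁻ x in Set.Icc (0:ℝ) 1, ENNReal.ofReal
      (|Real.sin (2 * Real.pi * n * (x + h)) - Real.sin (2 * Real.pi * n * x)| ^ p))
      ≤ ENNReal.ofReal (C ^ p) := by
    calc _ ≤ ∫⁻ x in Set.Icc (0:ℝ) 1, ENNReal.ofReal (C ^ p) := by
          apply lintegral_mono
          intro x
          apply ENNReal.ofReal_le_ofReal
          exact Real.rpow_le_rpow (abs_nonneg _) (hb x) (by linarith)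
      _ = _ := by simp
  calc _ ≤ (ENNReal.ofReal (C ^ p)) ^ (1 / p) := ENNReal.rpow_le_rpow h1 (by positivity)
    _ = _ := by
      rw [ENNReal.ofReal_rpow_of_nonneg (by positivity) (by positivity),
        ← Real.rpow_mul hC0, mul_one_div_cancel (by linarith), Real.rpow_one]

/-- For `t_n(x) = sin(2πnx)` and `1 ≤ p < ∞`:
`n^{1/p} ≤ v_p(t_n) ≤ 2π n^{1/p}`, and `ω(t_n;δ)_p ≤ 2π min(1, nδ)` for `0 < δ ≤ 1`. -/
theorem statement9 (p : ℝ) (hp : 1 ≤ p) (n : ℕ) (hn : 1 ≤ n) :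
    ENNReal.ofReal ((n : ℝ) ^ (1 / p))
        ≤ vp p (fun x => Real.sin (2 * Real.pi * n * x)) ∧
    vp p (fun x => Real.sin (2 * Real.pi * n * x))
        ≤ ENNReal.ofReal (2 * Real.pi * (n : ℝ) ^ (1 / p)) ∧
    ∀ δ : ℝ, 0 < δ → δ ≤ 1 →
      modulus1 p (fun x => Real.sin (2 * Real.pi * n * x)) δ
        ≤ ENNReal.ofReal (2 * Real.pi * min 1 ((n : ℝ) * δ)) := by
  exact ⟨s9_lower p hp n hn, s9_upper p hp n, fun δ _ _ => s9_mod p hp n δ⟩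
end

section
/- There is no constant A > 0 such that for every p ∈ (2,∞) and every continuous function f ∈ L^p([0,1]²) with I_p(f) < ∞ one has v_p^{(2)}(f) ≤ A[(1/p)·K_p(f) + (1/p²)·I_p(f)]. That is, the term ω(f;1,1)_p cannot be omitted from the estimate v_p^{(2)}(f) ≤ A[ω(f;1,1)_p + (1/p)K_p(f) + (1/p²)I_p(f)] valid for p > 2. -/
open MeasureTheory Filter Set
open scoped ENNReal

namespace S11

/-- one-variable test function -/
noncomputable def g (x : ℝ) : ℝ := Real.cos (2 * Real.pi * x)

lemma g_per (x : ℝ) : g (x + 1) = g x := by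
  unfold g
  rw [mul_add, mul_one, Real.cos_add_two_pi]

lemma g_lip (x s : ℝ) (hs : 0 ≤ s) : |g (x + s) - g x| ≤ 8 * s := by
  unfold g
  have h := Real.abs_cos_sub_cos_le (2 * Real.pi * (x + s)) (2 * Real.pi * x)
  refine h.trans ?_
  have e : 2 * Real.pi * (x + s) - 2 * Real.pi * x = 2 * Real.pi * s := by ring
  rw [e, abs_of_nonneg (by positivity)]
  nlinarith [Real.pi_le_four]

/-- the test function -/
noncomputable def F (x y : ℝ) : ℝ := g x * g y

lemma lpNorm2_le (p : ℝ) (hp : 2 < p) (f : ℝ → ℝ → ℝ) (C : ℝ) (h : ∀ x y, |f x y| ≤ C) :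
    lpNorm2 p f ≤ ENNReal.ofReal C := by
  have hC : 0 ≤ C := (abs_nonneg _).trans (h 0 0)
  unfold lpNorm2
  calc _ ≤ (∫⁻ x in Set.Icc (0:ℝ) 1, ∫⁻ y in Set.Icc (0:ℝ) 1,
      ENNReal.ofReal (C ^ p)) ^ (1 / p) := by
        refine ENNReal.rpow_le_rpow ?_ (by positivity)
        refine lintegral_mono fun x => lintegral_mono fun y => ?_
        exact ENNReal.ofReal_le_ofReal
          (Real.rpow_le_rpow (abs_nonneg _) (h x y) (by linarith))
    _ = ENNReal.ofReal C := by
        simp only [lintegral_const, Measure.restrict_apply_univ, Real.volume_Icc, sub_zero,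
          ENNReal.ofReal_one, mul_one]
        rw [← ENNReal.ofReal_rpow_of_nonneg hC (by linarith), ← ENNReal.rpow_mul,
          mul_one_div_cancel (by linarith), ENNReal.rpow_one]

lemma mixed_le (p : ℝ) (hp : 2 < p) (u v : ℝ) :
    mixedModulus p F u v ≤ ENNReal.ofReal (64 * (u * v)) := by
  unfold mixedModulus
  refine iSup_le fun s => iSup_le fun hs => iSup_le fun t => iSup_le fun ht => ?_
  refine lpNorm2_le p hp _ _ fun x y => ?_
  have e : F (x + s) (y + t) - F (x + s) y - F x (y + t) + F x y
      = (g (x + s) - g x) * (g (y + t) - g y) := by unfold F; ring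
  rw [e, abs_mul]
  have h1 := (g_lip x s hs.1).trans (mul_le_mul_of_nonneg_left hs.2 (by norm_num))
  have h2 := (g_lip y t ht.1).trans (mul_le_mul_of_nonneg_left ht.2 (by norm_num))
  calc _ ≤ (8 * u) * (8 * v) := mul_le_mul h1 h2 (abs_nonneg _) ((abs_nonneg _).trans h1)
    _ = _ := by ring

/-- the reference integral -/
noncomputable def c : ℝ≥0∞ := ∫⁻ t in Set.Ioc (0:ℝ) 1, ENNReal.ofReal (t ^ (-(1/2) : ℝ))

lemma c_lt : c < ⊤ := by
  have h := (intervalIntegral.intervalIntegrable_rpow' (a := 0) (b := 1) (r := -(1/2))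
    (by norm_num)).1
  exact h.lintegral_lt_top

lemma key (p : ℝ) (hp : 2 < p) (t : ℝ) (ht : t ∈ Set.Ioc (0:ℝ) 1) :
    t ^ (-(1/p)) ≤ t ^ (-(1/2) : ℝ) := by
  refine Real.rpow_le_rpow_of_exponent_ge ht.1 ht.2 ?_
  have : 1 / p ≤ 1 / 2 := one_div_le_one_div_of_le (by norm_num) hp.le
  linarith

lemma Kp_le (p : ℝ) (hp : 2 < p) : Kp p F ≤ ENNReal.ofReal 128 * c := by
  unfold Kp c
  rw [← lintegral_const_mul' _ _ ENNReal.ofReal_ne_top]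
  refine setLIntegral_mono' measurableSet_Ioc fun t ht => ?_
  have h0 := ht.1
  calc _ ≤ ENNReal.ofReal (t ^ (-(1/p)) / t) *
        (ENNReal.ofReal (64 * (t * 1)) + ENNReal.ofReal (64 * (1 * t))) := by
        gcongr <;> exact mixed_le p hp _ _
    _ = ENNReal.ofReal (128 * t ^ (-(1/p))) := by
        rw [← ENNReal.ofReal_add (by positivity) (by positivity),
          ← ENNReal.ofReal_mul (by positivity)]
        congr 1
        field_simp
        ring
    _ ≤ _ := by
        rw [← ENNReal.ofReal_mul (by norm_num)]
        exact ENNReal.ofReal_le_ofReal (mul_le_mul_of_nonneg_left (key p hp t ht) (by norm_num))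

lemma Ip_le (p : ℝ) (hp : 2 < p) : Ip p F ≤ ENNReal.ofReal 64 * (c * c) := by
  have h : ∀ u ∈ Set.Ioc (0:ℝ) 1, ∀ v ∈ Set.Ioc (0:ℝ) 1,
      ENNReal.ofReal ((u * v) ^ (-(1/p)) / (u * v)) * mixedModulus p F u v ≤
      (ENNReal.ofReal 64 * ENNReal.ofReal (u ^ (-(1/2) : ℝ))) *
        ENNReal.ofReal (v ^ (-(1/2) : ℝ)) := by
    intro u hu v hv
    have hu0 := hu.1
    have hv0 := hv.1
    calc _ ≤ ENNReal.ofReal ((u * v) ^ (-(1/p)) / (u * v)) * ENNReal.ofReal (64 * (u * v)) := by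
          gcongr; exact mixed_le p hp _ _
      _ = ENNReal.ofReal (64 * u ^ (-(1/p)) * v ^ (-(1/p))) := by
          rw [← ENNReal.ofReal_mul (by positivity), Real.mul_rpow hu0.le hv0.le]
          congr 1
          field_simp
      _ ≤ _ := by
          rw [← ENNReal.ofReal_mul (by norm_num), ← ENNReal.ofReal_mul (by positivity)]
          apply ENNReal.ofReal_le_ofReal
          have := key p hp u hu
          have := key p hp v hv
          gcongr
  unfold Ip
  calc _ ≤ ∫⁻ u in Set.Ioc (0:ℝ) 1, (ENNReal.ofReal 64 * ENNReal.ofReal (u ^ (-(1/2) : ℝ))) * c := by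
        refine setLIntegral_mono' measurableSet_Ioc fun u hu => ?_
        unfold c
        rw [← lintegral_const_mul' _ _ (ENNReal.mul_ne_top ENNReal.ofReal_ne_top
          ENNReal.ofReal_ne_top)]
        exact setLIntegral_mono' measurableSet_Ioc fun v hv => h u hu v hv
    _ = _ := by
        rw [lintegral_mul_const' _ _ c_lt.ne, lintegral_const_mul' _ _ ENNReal.ofReal_ne_top]
        rw [← mul_assoc]
        rfl

lemma vp2_ge (p : ℝ) (hp : 2 < p) : 1 ≤ vp2 p F := by
  have g0 : g 0 = 1 := by simp [g]
  have g1 : g (1/2) = -1 := by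
    unfold g
    rw [show 2 * Real.pi * (1/2) = Real.pi by ring, Real.cos_pi]
  have g2 : g 1 = 1 := by simp [g]
  unfold vp2
  refine le_iSup_of_le 2 <| le_iSup_of_le 2 <| le_iSup_of_le (fun i => (i:ℝ)/2) <|
    le_iSup_of_le (fun i => (i:ℝ)/2) <| le_iSup_of_le ?_ <| le_iSup_of_le ?_ <|
    le_iSup_of_le ?_ <| le_iSup_of_le ?_ ?_
  · intro i _; push_cast; linarith
  · norm_num
  · intro i _; push_cast; linarith
  · norm_num
  · rw [ENNReal.one_le_ofReal]
    refine Real.one_le_rpow ?_ (by positivity)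
    have h4 : (1:ℝ) ≤ 4 ^ p := Real.one_le_rpow (by norm_num) (by linarith)
    simp only [Finset.sum_range_succ, Finset.sum_range_zero, F]
    norm_num
    norm_num at g1
    rw [g0, g1, g2]
    norm_num
    linarith

lemma F_cont : Continuous (Function.uncurry F) := by
  unfold F g Function.uncurry
  fun_prop

lemma F_mem (p : ℝ) (hp : 2 < p) : MemLp2 p F := by
  refine ⟨F_cont.measurable, ⟨fun x y => ?_, fun x y => ?_⟩, ?_⟩
  · simp [F, g_per]
  · simp [F, g_per]
  · refine (lpNorm2_le p hp F 1 fun x y => ?_).trans_lt ENNReal.ofReal_lt_top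
    unfold F g
    rw [abs_mul]
    exact mul_le_one₀ (Real.abs_cos_le_one _) (abs_nonneg _) (Real.abs_cos_le_one _)

end S11

/-- There is no `A > 0` such that for all `p > 2` and all continuous
`f ∈ L^p([0,1]²)` with `I_p(f) < ∞` one has
`v_p⁽²⁾(f) ≤ A [(1/p) K_p(f) + (1/p²) I_p(f)]`: the term `ω(f;1,1)_p` cannot be omitted. -/
theorem statement11 :
    ¬ ∃ A : ℝ, 0 < A ∧
      ∀ p : ℝ, 2 < p → ∀ f : ℝ → ℝ → ℝ,
        Continuous (Function.uncurry f) → MemLp2 p f → Ip p f < ⊤ →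
          vp2 p f ≤ ENNReal.ofReal A *
            (ENNReal.ofReal (1 / p) * Kp p f + ENNReal.ofReal (1 / p ^ 2) * Ip p f) := by
  rintro ⟨A, hA, H⟩
  obtain ⟨C, hC⟩ : ∃ C : ℝ, C = S11.c.toReal := ⟨_, rfl⟩
  have hC0 : 0 ≤ C := hC ▸ ENNReal.toReal_nonneg
  have hc : S11.c = ENNReal.ofReal C := by rw [hC, ENNReal.ofReal_toReal S11.c_lt.ne]
  obtain ⟨p, hpd⟩ : ∃ p : ℝ, p = 3 + A * (128 * C + 64 * (C * C)) := ⟨_, rfl⟩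
  have hB : 0 ≤ A * (128 * C + 64 * (C * C)) := by positivity
  have hp : 2 < p := by linarith
  have hI := S11.Ip_le p hp
  have hK := S11.Kp_le p hp
  rw [hc] at hI hK
  have h := H p hp S11.F S11.F_cont (S11.F_mem p hp) (hI.trans_lt (by finiteness))
  have h2 : (1 : ℝ≥0∞) ≤ ENNReal.ofReal A * (ENNReal.ofReal (1 / p) *
      (ENNReal.ofReal 128 * ENNReal.ofReal C) + ENNReal.ofReal (1 / p ^ 2) *
      (ENNReal.ofReal 64 * (ENNReal.ofReal C * ENNReal.ofReal C))) :=
    ((S11.vp2_ge p hp).trans h).trans (by gcongr)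
  have hp0 : 0 < p := by linarith
  rw [← ENNReal.ofReal_mul hC0, ← ENNReal.ofReal_mul (by norm_num : (0:ℝ) ≤ 128),
    ← ENNReal.ofReal_mul (by norm_num : (0:ℝ) ≤ 64), ← ENNReal.ofReal_mul (by positivity),
    ← ENNReal.ofReal_mul (by positivity), ← ENNReal.ofReal_add (by positivity) (by positivity),
    ← ENNReal.ofReal_mul hA.le, ENNReal.one_le_ofReal] at h2
  have h3 : 1 / p ^ 2 ≤ 1 / p := one_div_le_one_div_of_le hp0 (by nlinarith)
  have h4 : A * (1 / p * (128 * C) + 1 / p ^ 2 * (64 * (C * C))) ≤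
      A * (1 / p * (128 * C) + 1 / p * (64 * (C * C))) := by gcongr
  have h5 : A * (1 / p * (128 * C) + 1 / p * (64 * (C * C))) =
      (A * (128 * C + 64 * (C * C))) / p := by ring
  have h6 : (A * (128 * C + 64 * (C * C))) / p < 1 := by
    rw [div_lt_one hp0]; linarith
  linarith
end
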